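/- Let K be a field, A = K[x_1, ..., x_n], and F ∈ A^{l×l} with det(F) = p^t, where p ∈ K[x_1] is an irreducible polynomial and t is a positive integer. Assume the Smith form of F is diag(p^{s_1}, ..., p^{s_l}) with s_1 ≤ ... ≤ s_l. Then F is equivalent to its Smith form diag(p^{s_1}, ..., p^{s_l}) if and only if J_i(F) = A for all i = 1, ..., l. -/

import Mathlib

/-- Two `l × m` matrices over a commutative ring are equivalent if they differ by
left/right multiplication by square matrices with unit determinant. -/
def MatrixEquiv {B : Type*} [CommRing B] {l m : ℕ}
    (F G : Matrix (Fin l) (Fin m) B) : Prop :=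
  ∃ (U : Matrix (Fin l) (Fin l) B) (V : Matrix (Fin m) (Fin m) B),
    IsUnit U.det ∧ IsUnit V.det ∧ F = U * G * V

/-- The set of all `i × i` minors of a matrix. -/
def minorsSet {R : Type*} [CommRing R] {l m : ℕ} (i : ℕ)
    (F : Matrix (Fin l) (Fin m) R) : Set R :=
  {a | ∃ (f : Fin i → Fin l) (g : Fin i → Fin m),
      StrictMono f ∧ StrictMono g ∧ a = (F.submatrix f g).det}

/-- `d` is a greatest common divisor of the set `s`. -/
def IsGcdOf {R : Type*} [CommRing R] (d : R) (s : Set R) : Prop :=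
  (∀ a ∈ s, d ∣ a) ∧ ∀ c : R, (∀ a ∈ s, c ∣ a) → c ∣ d

/-- `J_i(F) = A`: letting `d` be a gcd of the `i × i` minors of `F`, the `i × i`
reduced minors (the minors divided by `d`) generate the unit ideal. -/
def ReducedMinorsUnitIdeal {R : Type*} [CommRing R] {l m : ℕ} (i : ℕ)
    (F : Matrix (Fin l) (Fin m) R) : Prop :=
  ∃ d : R, IsGcdOf d (minorsSet i F) ∧
    Ideal.span {b : R | d * b ∈ minorsSet i F} = ⊤

/-- The image of a univariate polynomial `p ∈ K[x₁]` in `A = K[x₁, …, x_{n+1}]`,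
sending the variable to `x₁` (the variable of index `0`). -/
noncomputable def polyImage {K : Type*} [CommRing K] (n : ℕ) (p : Polynomial K) :
    MvPolynomial (Fin (n + 1)) K :=
  Polynomial.aeval (MvPolynomial.X 0) p

open Polynomial

/-!
That determinantal ideals characterize diagonal matrices up to equivalence is proved by elimination
over local rings and Euclidean domains. Over `K[x₁, …, x_n]` one inducts on the number of variables,
for an arbitrary divisor chain `q₁ ∣ q₂ ∣ ⋯` in `K[x₁]`. Put `R = K[x₁, …, x_{n-1}]` and `x = x_n`.

* Adjoining `x` to the field of coefficients, the induction hypothesis diagonalizes `F` over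
  `K(x)[x₁, …, x_{n-1}]`; clearing denominators, `F` becomes diagonal after inverting a monic
  polynomial of `R[x]`.
* Horrocks' argument: over `R_M[x]`, with `M` a maximal ideal of `R`, diagonalizability after
  inverting a monic polynomial and at each maximal ideal of `R_M[x]` implies diagonalizability. One
  splits off a rank one summand by means of a monic polynomial, which turns questions over `R_M[x]`
  into questions about a finite `R_M`-module.
* Quillen patching: since `F` is equivalent over every `R_M[x]` to a matrix free of `x`, it is
  equivalent over `R[x]` to its value at `x = 0`, to which the induction hypothesis applies.
-/

namespace MatrixEquiv

variable {R S : Type*} [CommRing R] [CommRing S] {l m : ℕ} {F G H : Matrix (Fin l) (Fin m) R}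

theorem mul_left {U : Matrix (Fin l) (Fin l) R} (hU : IsUnit U.det) : MatrixEquiv (U * F) F :=
  ⟨U, 1, hU, by simp, by simp⟩

theorem refl (F : Matrix (Fin l) (Fin m) R) : MatrixEquiv F F :=
  ⟨1, 1, by simp, by simp, by simp⟩

theorem trans (hFG : MatrixEquiv F G) (hGH : MatrixEquiv G H) : MatrixEquiv F H := by
  obtain ⟨U, V, hU, hV, rfl⟩ := hFG
  obtain ⟨U', V', hU', hV', rfl⟩ := hGH
  exact ⟨U * U', V' * V, by simpa using hU.mul hU', by simpa using hV'.mul hV,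
    by simp only [Matrix.mul_assoc]⟩

theorem symm (h : MatrixEquiv F G) : MatrixEquiv G F := by
  obtain ⟨U, V, hU, hV, rfl⟩ := h
  refine ⟨U⁻¹, V⁻¹, Matrix.isUnit_nonsing_inv_det U hU, Matrix.isUnit_nonsing_inv_det V hV, ?_⟩
  rw [Matrix.mul_assoc U, Matrix.nonsing_inv_mul_cancel_left _ _ hU,
    Matrix.mul_nonsing_inv_cancel_right _ _ hV]

theorem map (θ : R →+* S) (h : MatrixEquiv F G) : MatrixEquiv (F.map θ) (G.map θ) := by
  obtain ⟨U, V, hU, hV, rfl⟩ := h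
  refine ⟨U.map θ, V.map θ, ?_, ?_, by simp only [Matrix.map_mul]⟩
  · rw [← RingHom.mapMatrix_apply, ← RingHom.map_det]; exact hU.map θ
  · rw [← RingHom.mapMatrix_apply, ← RingHom.map_det]; exact hV.map θ

theorem map_iff_of_ringEquiv (e : R ≃+* S) : MatrixEquiv (F.map e) (G.map e) ↔ MatrixEquiv F G := by
  refine ⟨fun h => ?_, fun h => h.map (e : R →+* S)⟩
  simpa [Matrix.map_map, Function.comp_def] using h.map (e.symm : S →+* R)

theorem smul (c : R) (h : MatrixEquiv F G) : MatrixEquiv (c • F) (c • G) := by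
  obtain ⟨U, V, hU, hV, rfl⟩ := h
  exact ⟨U, V, hU, hV, by simp only [Matrix.mul_smul, Matrix.smul_mul]⟩

theorem transpose (h : MatrixEquiv F G) : MatrixEquiv F.transpose G.transpose := by
  obtain ⟨U, V, hU, hV, rfl⟩ := h
  exact ⟨V.transpose, U.transpose, by simpa using hV, by simpa using hU,
    by simp only [Matrix.transpose_mul, Matrix.mul_assoc]⟩

theorem submatrix_rows (F : Matrix (Fin l) (Fin m) R) (σ : Equiv.Perm (Fin l)) :
    MatrixEquiv (F.submatrix σ id) F := by
  rw [← PEquiv.toMatrix_toPEquiv_mul]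
  refine mul_left ?_
  rw [Matrix.det_permutation]
  exact (Units.isUnit _).map (Int.castRingHom R)

theorem submatrix (F : Matrix (Fin l) (Fin m) R) (σ : Equiv.Perm (Fin l))
    (τ : Equiv.Perm (Fin m)) : MatrixEquiv (F.submatrix σ τ) F :=
  (submatrix_rows (F.submatrix id τ) σ).trans (submatrix_rows F.transpose τ).transpose

end MatrixEquiv

section MinorsIdeal

variable {R S m n o : Type*} [CommRing R] [CommRing S]

/-- The determinantal ideal generated by the `i × i` minors of `F`. Arbitrary tuples of row and
column indices are allowed: a repeated index gives the minor `0` and a permuted one changes the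
sign at most. -/
def minorsIdeal (i : ℕ) (F : Matrix m n R) : Ideal R :=
  Ideal.span (Set.range fun fg : (Fin i → m) × (Fin i → n) => (F.submatrix fg.1 fg.2).det)

theorem minorsIdeal_le_iff {i : ℕ} {F : Matrix m n R} {I : Ideal R} :
    minorsIdeal i F ≤ I ↔ ∀ (f : Fin i → m) (g : Fin i → n), (F.submatrix f g).det ∈ I := by
  rw [minorsIdeal, Ideal.span_le, Set.range_subset_iff, Prod.forall]
  exact Iff.rfl

theorem det_submatrix_mem_minorsIdeal {i : ℕ} (F : Matrix m n R) (f : Fin i → m)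
    (g : Fin i → n) : (F.submatrix f g).det ∈ minorsIdeal i F :=
  Ideal.subset_span ⟨(f, g), rfl⟩

theorem minorsIdeal_one_le_iff {F : Matrix m n R} {I : Ideal R} :
    minorsIdeal 1 F ≤ I ↔ ∀ i j, F i j ∈ I := by
  simp only [minorsIdeal_le_iff, Matrix.det_fin_one, Matrix.submatrix_apply]
  exact ⟨fun h i j => h (fun _ => i) fun _ => j, fun h f g => h _ _⟩

theorem minorsIdeal_transpose (i : ℕ) (F : Matrix m n R) :
    minorsIdeal i F.transpose = minorsIdeal i F := by
  apply le_antisymm <;> refine minorsIdeal_le_iff.2 fun f g => ?_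
  · rw [← Matrix.transpose_submatrix, Matrix.det_transpose]
    exact det_submatrix_mem_minorsIdeal F g f
  · rw [← Matrix.det_transpose, Matrix.transpose_submatrix]
    exact det_submatrix_mem_minorsIdeal F.transpose g f

theorem minorsIdeal_mul_le_right [Fintype n] (i : ℕ) (U : Matrix m n R) (F : Matrix n o R) :
    minorsIdeal i (U * F) ≤ minorsIdeal i F := by
  refine minorsIdeal_le_iff.2 fun f g => ?_
  have hrows : (U * F).submatrix f g = fun a => ∑ k, U (f a) k • fun b => F k (g b) := by
    ext a b
    simp [Matrix.mul_apply]
  change Matrix.detRowAlternating.toMultilinearMap ((U * F).submatrix f g) ∈ _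
  rw [hrows, MultilinearMap.map_sum]
  refine Ideal.sum_mem _ fun κ _ => ?_
  rw [MultilinearMap.map_smul_univ]
  exact Ideal.mul_mem_left _ _ (det_submatrix_mem_minorsIdeal F κ g)

theorem minorsIdeal_mul_le_left [Fintype n] (i : ℕ) (F : Matrix m n R) (V : Matrix n o R) :
    minorsIdeal i (F * V) ≤ minorsIdeal i F := by
  rw [← minorsIdeal_transpose, Matrix.transpose_mul, ← minorsIdeal_transpose i F]
  exact minorsIdeal_mul_le_right _ _ _

theorem MatrixEquiv.minorsIdeal_eq {k l : ℕ} {F G : Matrix (Fin k) (Fin l) R}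
    (h : MatrixEquiv F G) (i : ℕ) : minorsIdeal i F = minorsIdeal i G := by
  have key : ∀ {F G : Matrix (Fin k) (Fin l) R}, MatrixEquiv F G →
      minorsIdeal i F ≤ minorsIdeal i G := by
    rintro F G ⟨U, V, -, -, rfl⟩
    exact (minorsIdeal_mul_le_left _ _ _).trans (minorsIdeal_mul_le_right _ _ _)
  exact le_antisymm (key h) (key h.symm)

theorem minorsIdeal_map (θ : R →+* S) (i : ℕ) (F : Matrix m n R) :
    minorsIdeal i (F.map θ) = (minorsIdeal i F).map θ := by
  rw [minorsIdeal, minorsIdeal, Ideal.map_span, ← Set.range_comp]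
  congr 2
  funext fg
  rw [Function.comp_apply, RingHom.map_det]
  rfl

theorem minorsIdeal_smul (c : R) (i : ℕ) (F : Matrix m n R) :
    minorsIdeal i (c • F) = Ideal.span {c ^ i} * minorsIdeal i F := by
  rw [minorsIdeal, minorsIdeal, Ideal.span_mul_span', Set.singleton_mul, ← Set.range_comp]
  congr 2
  funext fg
  simp [Matrix.submatrix_smul]

theorem minorsIdeal_succ_le_submatrix_succ {k : ℕ} (i : ℕ) (F : Matrix (Fin (k + 1)) n R) :
    minorsIdeal (i + 1) F ≤ minorsIdeal i (F.submatrix Fin.succ id) := by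
  refine minorsIdeal_le_iff.2 fun f g => ?_
  by_cases hf : Function.Injective f
  · obtain ⟨a, ha⟩ : ∃ a : Fin (i + 1), ∀ b, f (a.succAbove b) ≠ 0 := by
      by_cases h0 : ∃ a, f a = 0
      · obtain ⟨a, ha⟩ := h0
        exact ⟨a, fun b hb => a.succAbove_ne b (hf (hb.trans ha.symm))⟩
      · exact ⟨0, fun b hb => h0 ⟨_, hb⟩⟩
    choose f' hf' using fun b => Fin.exists_succ_eq.2 (ha b)
    rw [Matrix.det_succ_row _ a]
    refine Ideal.sum_mem _ fun j _ => Ideal.mul_mem_left _ _ ?_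
    convert det_submatrix_mem_minorsIdeal (F.submatrix Fin.succ id) f' (g ∘ j.succAbove) using 2
    ext b c
    simp [hf']
  · obtain ⟨a, b, hab, hne⟩ : ∃ a b, f a = f b ∧ a ≠ b := by
      simpa [Function.Injective] using hf
    rw [Matrix.det_zero_of_row_eq hne (by ext; simp [hab])]
    exact zero_mem _

theorem det_submatrix_mem_span_minorsSet {i k l : ℕ} (F : Matrix (Fin k) (Fin l) R)
    (f : Fin i → Fin k) (g : Fin i → Fin l) :
    (F.submatrix f g).det ∈ Ideal.span (minorsSet i F) := by
  by_cases hfg : Function.Injective f ∧ Function.Injective g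
  · have hf : StrictMono (f ∘ Tuple.sort f) :=
      (Tuple.monotone_sort f).strictMono_of_injective (hfg.1.comp (Equiv.injective _))
    have hg : StrictMono (g ∘ Tuple.sort g) :=
      (Tuple.monotone_sort g).strictMono_of_injective (hfg.2.comp (Equiv.injective _))
    have hsorted : (((F.submatrix f g).submatrix (Tuple.sort f) id).submatrix id
        (Tuple.sort g)).det ∈ Ideal.span (minorsSet i F) :=
      Ideal.subset_span ⟨_, _, hf, hg, rfl⟩
    rw [Matrix.det_permute', Matrix.det_permute] at hsorted
    rcases Int.units_eq_one_or (Equiv.Perm.sign (Tuple.sort f)) with h | h <;>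
    rcases Int.units_eq_one_or (Equiv.Perm.sign (Tuple.sort g)) with h' | h' <;>
    simpa [h, h'] using hsorted
  · suffices hdet : (F.submatrix f g).det = 0 from hdet ▸ zero_mem _
    rcases not_and_or.1 hfg with hf | hg
    · obtain ⟨a, b, hab, hne⟩ := Function.not_injective_iff.1 hf
      exact Matrix.det_zero_of_row_eq hne (by ext; simp [hab])
    · obtain ⟨a, b, hab, hne⟩ := Function.not_injective_iff.1 hg
      exact Matrix.det_zero_of_column_eq hne (by simp [hab])

theorem span_minorsSet (i : ℕ) {k l : ℕ} (F : Matrix (Fin k) (Fin l) R) :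
    Ideal.span (minorsSet i F) = minorsIdeal i F := by
  refine le_antisymm (Ideal.span_le.2 ?_)
    (minorsIdeal_le_iff.2 fun f g => det_submatrix_mem_span_minorsSet F f g)
  rintro _ ⟨f, g, -, -, rfl⟩
  exact det_submatrix_mem_minorsIdeal F f g

end MinorsIdeal

section ConsMatrix

variable {R : Type*} [CommRing R] {l : ℕ}

/-- The splitting of `Fin (l + 1)` into its tail `Fin l` and its head `0`, used to view matrices
indexed by `Fin (l + 1)` as block matrices. -/
def finSuccEquivSum (l : ℕ) : Fin (l + 1) ≃ Fin l ⊕ Unit :=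
  (finSuccEquiv l).trans (Equiv.optionEquivSumPUnit (Fin l))

@[simp] theorem finSuccEquivSum_zero : finSuccEquivSum l 0 = .inr () := by
  simp [finSuccEquivSum]

@[simp] theorem finSuccEquivSum_succ (i : Fin l) : finSuccEquivSum l i.succ = .inl i := by
  simp [finSuccEquivSum]

/-- The block sum of the `1 × 1` matrix `1` and `F`. -/
def oneConsMatrix (F : Matrix (Fin l) (Fin l) R) : Matrix (Fin (l + 1)) (Fin (l + 1)) R :=
  (Matrix.fromBlocks F 0 0 1).submatrix (finSuccEquivSum l) (finSuccEquivSum l)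

theorem oneConsMatrix_mul (F G : Matrix (Fin l) (Fin l) R) :
    oneConsMatrix F * oneConsMatrix G = oneConsMatrix (F * G) := by
  simp [oneConsMatrix, Matrix.submatrix_mul_equiv, Matrix.fromBlocks_multiply]

theorem det_oneConsMatrix (F : Matrix (Fin l) (Fin l) R) : (oneConsMatrix F).det = F.det := by
  simp [oneConsMatrix]

theorem oneConsMatrix_diagonal {q : Fin (l + 1) → R} (hq : q 0 = 1) :
    oneConsMatrix (Matrix.diagonal fun i => q i.succ) = Matrix.diagonal q := by
  ext i j
  refine Fin.cases ?_ (fun i => ?_) i <;> refine Fin.cases ?_ (fun j => ?_) j <;>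
    simp [oneConsMatrix, Matrix.diagonal_apply, hq, Fin.succ_ne_zero, (Fin.succ_ne_zero _).symm]

theorem MatrixEquiv.oneConsMatrix {F G : Matrix (Fin l) (Fin l) R} (h : MatrixEquiv F G) :
    MatrixEquiv (oneConsMatrix F) (oneConsMatrix G) := by
  obtain ⟨U, V, hU, hV, rfl⟩ := h
  exact ⟨_root_.oneConsMatrix U, _root_.oneConsMatrix V, by rwa [det_oneConsMatrix],
    by rwa [det_oneConsMatrix], by simp only [oneConsMatrix_mul]⟩

theorem minorsIdeal_oneConsMatrix (i : ℕ) (F : Matrix (Fin l) (Fin l) R) :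
    minorsIdeal (i + 1) (oneConsMatrix F) = minorsIdeal i F := by
  apply le_antisymm
  · have hrows : (oneConsMatrix F).submatrix Fin.succ id =
        F * (1 : Matrix (Fin (l + 1)) (Fin (l + 1)) R).submatrix Fin.succ id := by
      ext a b
      refine Fin.cases ?_ (fun b => ?_) b <;>
        simp [oneConsMatrix, Matrix.mul_apply, Matrix.one_apply, Fin.succ_ne_zero]
    exact (minorsIdeal_succ_le_submatrix_succ i _).trans
      (hrows ▸ minorsIdeal_mul_le_left _ _ _)
  · refine minorsIdeal_le_iff.2 fun f g => ?_
    rw [← det_oneConsMatrix]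
    convert det_submatrix_mem_minorsIdeal (oneConsMatrix F)
      (Fin.cons 0 (Fin.succ ∘ f) : Fin (i + 1) → Fin (l + 1))
      (Fin.cons 0 (Fin.succ ∘ g) : Fin (i + 1) → Fin (l + 1)) using 2
    ext a b
    refine Fin.cases ?_ (fun a => ?_) a <;> refine Fin.cases ?_ (fun b => ?_) b <;>
      simp [oneConsMatrix]

theorem exists_matrixEquiv_oneConsMatrix {G : Matrix (Fin (l + 1)) (Fin (l + 1)) R}
    (hG : IsUnit (G 0 0)) : ∃ F, MatrixEquiv G (oneConsMatrix F) := by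
  let e := finSuccEquivSum l
  let G' := Matrix.reindex e e G
  have hD : IsUnit G'.toBlocks₂₂.det := by
    rw [Matrix.det_unique]
    exact hG
  let _ := Matrix.invertibleOfIsUnitDet _ hD
  let U : Matrix (Fin l ⊕ Unit) (Fin l ⊕ Unit) R :=
    Matrix.fromBlocks 1 (G'.toBlocks₁₂ * ⅟G'.toBlocks₂₂) 0 1 * Matrix.fromBlocks 1 0 0 G'.toBlocks₂₂
  let F := G'.toBlocks₁₁ - G'.toBlocks₁₂ * ⅟G'.toBlocks₂₂ * G'.toBlocks₂₁
  let V : Matrix (Fin l ⊕ Unit) (Fin l ⊕ Unit) R :=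
    Matrix.fromBlocks 1 0 (⅟G'.toBlocks₂₂ * G'.toBlocks₂₁) 1
  have hschur : G' = U * Matrix.fromBlocks F 0 0 1 * V := by
    conv_lhs => rw [← G'.fromBlocks_toBlocks, Matrix.fromBlocks_eq_of_invertible₂₂]
    simp only [U, F, V, Matrix.mul_assoc, Matrix.fromBlocks_multiply]
    simp
  refine ⟨F, U.submatrix e e, V.submatrix e e, ?_, by simp [V], ?_⟩
  · simpa [U] using hD
  · rw [oneConsMatrix, Matrix.submatrix_mul_equiv, Matrix.submatrix_mul_equiv, ← hschur]
    simp [G', e]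

end ConsMatrix

section Elimination

variable {R S : Type*} [CommRing R] [CommRing S] {l : ℕ}

theorem prod_Iic_succ (q : Fin (l + 1) → R) (i : Fin l) :
    ∏ j ∈ Finset.Iic i.succ, q j = q 0 * ∏ j ∈ Finset.Iic i, q j.succ := by
  have hIic : Finset.Iic i.succ =
      Finset.cons 0 ((Finset.Iic i).map (Fin.succEmb l)) (by simp) := by
    ext j
    refine Fin.cases ?_ (fun j => ?_) j <;> simp
  rw [hIic, Finset.prod_cons, Finset.prod_map]
  rfl

/-- The determinantal ideals of `F` are those of the diagonal matrix with entries `q i`, where each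
`q i` divides the next: the ideal of `(i + 1) × (i + 1)` minors is generated by
`q 0 * ⋯ * q i`. -/
def HasDetDivisors (q : Fin l → R) (F : Matrix (Fin l) (Fin l) R) : Prop :=
  ∀ i : Fin l, minorsIdeal (i + 1) F = Ideal.span {∏ j ∈ Finset.Iic i, q j}

namespace HasDetDivisors

theorem map (θ : R →+* S) {q : Fin l → R} {F : Matrix (Fin l) (Fin l) R}
    (h : HasDetDivisors q F) : HasDetDivisors (fun i => θ (q i)) (F.map θ) := fun i => by
  rw [minorsIdeal_map, h i, Ideal.map_span, Set.image_singleton, map_prod]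

theorem congr {q : Fin l → R} {F G : Matrix (Fin l) (Fin l) R} (h : HasDetDivisors q F)
    (hFG : MatrixEquiv F G) : HasDetDivisors q G := fun i => by
  rw [← hFG.minorsIdeal_eq, h i]

theorem minorsIdeal_one {q : Fin (l + 1) → R} {F : Matrix (Fin (l + 1)) (Fin (l + 1)) R}
    (h : HasDetDivisors q F) : minorsIdeal 1 F = Ideal.span {q 0} := by
  have hIic : Finset.Iic (0 : Fin (l + 1)) = {0} := Finset.Iic_bot
  simpa [hIic] using h 0

theorem of_smul [IsDomain R] {c : R} (hc : c ≠ 0) {q : Fin l → R}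
    {F : Matrix (Fin l) (Fin l) R} (h : HasDetDivisors (c • q) (c • F)) : HasDetDivisors q F :=
  fun i => by
  have hi := h i
  simp only [minorsIdeal_smul, Pi.smul_apply, smul_eq_mul, Finset.prod_mul_distrib,
    Finset.prod_const, Fin.card_Iic, ← Ideal.span_singleton_mul_span_singleton] at hi
  exact Ideal.span_singleton_mul_right_injective (pow_ne_zero _ hc) hi

theorem of_oneConsMatrix {q : Fin (l + 1) → R} (hq : q 0 = 1) {F : Matrix (Fin l) (Fin l) R}
    (h : HasDetDivisors q (oneConsMatrix F)) : HasDetDivisors (fun i => q i.succ) F := fun i => by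
  rw [← minorsIdeal_oneConsMatrix, ← one_mul (∏ j ∈ Finset.Iic i, q j.succ), ← hq,
    ← prod_Iic_succ, ← h i.succ, Fin.val_succ]

end HasDetDivisors

/-- Up to equivalence, every nonempty square matrix over `R` whose entries generate the unit ideal
has a unit among its entries. This is all that elimination needs from the ring. -/
def HasUnitPivots (R : Type*) [CommRing R] : Prop :=
  ∀ (l : ℕ) (F : Matrix (Fin (l + 1)) (Fin (l + 1)) R), minorsIdeal 1 F = ⊤ →
    ∃ G i j, MatrixEquiv F G ∧ IsUnit (G i j)

theorem HasUnitPivots.exists_matrixEquiv_oneConsMatrix (hR : HasUnitPivots R)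
    {F : Matrix (Fin (l + 1)) (Fin (l + 1)) R} (hF : minorsIdeal 1 F = ⊤) :
    ∃ F', MatrixEquiv F (oneConsMatrix F') := by
  obtain ⟨G, i, j, hFG, hG⟩ := hR l F hF
  have hswap := MatrixEquiv.submatrix G (Equiv.swap 0 i) (Equiv.swap 0 j)
  obtain ⟨F', hF'⟩ := _root_.exists_matrixEquiv_oneConsMatrix
    (G := G.submatrix (Equiv.swap 0 i) (Equiv.swap 0 j)) (by simpa using hG)
  exact ⟨F', (hFG.trans hswap.symm).trans hF'⟩

theorem HasUnitPivots.matrixEquiv_diagonal [IsDomain R] (hR : HasUnitPivots R) {q : Fin l → R}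
    (hq0 : ∀ i, q i ≠ 0) (hq : ∀ i j, i ≤ j → q i ∣ q j) {F : Matrix (Fin l) (Fin l) R}
    (hF : HasDetDivisors q F) : MatrixEquiv F (Matrix.diagonal q) := by
  induction l with
  | zero => exact Subsingleton.elim F (Matrix.diagonal q) ▸ .refl F
  | succ l ih =>
    have hdvd : ∀ i j, q 0 ∣ F i j := fun i j =>
      Ideal.mem_span_singleton.1 (minorsIdeal_one_le_iff.1 hF.minorsIdeal_one.le i j)
    choose F₀ hF₀ using hdvd
    choose q₀ hq₀ using fun i => hq 0 i (Fin.zero_le i)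
    obtain rfl : F = q 0 • Matrix.of F₀ := by ext i j; exact hF₀ i j
    have hqq₀ : q = q 0 • q₀ := funext hq₀
    have hq₀0 : q₀ 0 = 1 := mul_left_cancel₀ (hq0 0) (by rw [← hq₀, mul_one])
    have hF₀q₀ : HasDetDivisors q₀ (Matrix.of F₀) :=
      .of_smul (hq0 0) (by rwa [← hqq₀])
    obtain ⟨F', hF'⟩ := hR.exists_matrixEquiv_oneConsMatrix (F := Matrix.of F₀)
      (by rw [hF₀q₀.minorsIdeal_one, hq₀0, Ideal.span_singleton_one])
    have htail : MatrixEquiv F' (Matrix.diagonal fun i => q₀ i.succ) := by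
      refine ih (fun i hi => hq0 i.succ (by rw [hq₀, hi, mul_zero])) (fun i j hij => ?_)
        ((hF₀q₀.congr hF').of_oneConsMatrix hq₀0)
      have := hq i.succ j.succ (Fin.succ_le_succ_iff.2 hij)
      rwa [hq₀ i.succ, hq₀ j.succ, mul_dvd_mul_iff_left (hq0 0)] at this
    have := (hF'.trans htail.oneConsMatrix).smul (q 0)
    rwa [oneConsMatrix_diagonal hq₀0, ← Matrix.diagonal_smul, ← hqq₀] at this

theorem hasUnitPivots_of_isLocalRing [IsLocalRing R] : HasUnitPivots R := by
  intro l F hF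
  by_contra! hno
  refine (IsLocalRing.maximalIdeal.isMaximal R).ne_top (top_le_iff.1 (hF ▸ ?_))
  exact minorsIdeal_one_le_iff.2 fun i j => hno F i j (.refl F)

end Elimination

section EuclideanElimination

variable {R : Type*} [EuclideanDomain R] {l m : ℕ} {F : Matrix (Fin l) (Fin m) R} {a : R}

/-- No nonzero entry of a matrix equivalent to `F` is smaller than `a` for the Euclidean
relation. -/
def IsEntryLowerBound (a : R) (F : Matrix (Fin l) (Fin m) R) : Prop :=
  ∀ G i j, MatrixEquiv F G → G i j ≠ 0 → ¬ EuclideanDomain.r (G i j) a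

namespace IsEntryLowerBound

theorem congr (h : IsEntryLowerBound a F) {G : Matrix (Fin l) (Fin m) R} (hFG : MatrixEquiv F G) :
    IsEntryLowerBound a G :=
  fun H i j hGH => h H i j (hFG.trans hGH)

theorem transpose (h : IsEntryLowerBound a F) : IsEntryLowerBound a F.transpose :=
  fun G i j hG => h G.transpose j i hG.transpose

theorem dvd_apply_of_eq_left (h : IsEntryLowerBound a F) (ha : a ≠ 0) {i : Fin l} {j : Fin m}
    (hij : F i j = a) (i' : Fin l) : a ∣ F i' j := by
  by_cases hi : i' = i
  · rw [hi, hij]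
  have hrow : MatrixEquiv F (Matrix.transvection i' i (-(F i' j / a)) * F) :=
    (MatrixEquiv.mul_left (by simp [Matrix.det_transvection_of_ne _ _ hi])).symm
  have hmod : (Matrix.transvection i' i (-(F i' j / a)) * F) i' j = F i' j % a := by
    rw [Matrix.transvection_mul_apply_same, hij, EuclideanDomain.mod_eq_sub_mul_div]
    ring
  rw [← EuclideanDomain.mod_eq_zero]
  by_contra hne
  exact h _ i' j hrow (hmod ▸ hne) (hmod ▸ EuclideanDomain.mod_lt _ ha)

theorem dvd_apply_of_eq_right (h : IsEntryLowerBound a F) (ha : a ≠ 0) {i : Fin l} {j : Fin m}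
    (hij : F i j = a) (j' : Fin m) : a ∣ F i j' :=
  h.transpose.dvd_apply_of_eq_left ha (F := F.transpose) hij j'

theorem dvd_apply (h : IsEntryLowerBound a F) (ha : a ≠ 0) {i : Fin l} {j : Fin m}
    (hij : F i j = a) (i' : Fin l) (j' : Fin m) : a ∣ F i' j' := by
  by_cases hi : i' = i
  · exact hi ▸ h.dvd_apply_of_eq_right ha hij j'
  obtain ⟨b, hb⟩ := h.dvd_apply_of_eq_left ha hij i'
  -- Adding `1 - b` times row `i` to row `i'` puts a copy of `a` at position `(i', j)`.
  have hrow : MatrixEquiv F (Matrix.transvection i' i (1 - b) * F) :=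
    (MatrixEquiv.mul_left (by simp [Matrix.det_transvection_of_ne _ _ hi])).symm
  have hdvd := (h.congr hrow).dvd_apply_of_eq_right ha (i := i') (j := j)
    (by rw [Matrix.transvection_mul_apply_same, hij, hb]; ring) j'
  rw [Matrix.transvection_mul_apply_same] at hdvd
  exact (dvd_add_left ((h.dvd_apply_of_eq_right ha hij j').mul_left _)).1 hdvd

end IsEntryLowerBound

theorem exists_matrixEquiv_apply_dvd (hF : F ≠ 0) :
    ∃ G i j, MatrixEquiv F G ∧ ∀ i' j', G i j ∣ G i' j' := by
  let T : Set R := {a | a ≠ 0 ∧ ∃ G i j, MatrixEquiv F G ∧ G i j = a}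
  have hT : T.Nonempty := by
    by_contra hempty
    refine hF (Matrix.ext fun i j => ?_)
    by_contra hij
    exact hempty ⟨_, hij, F, i, j, .refl F, rfl⟩
  obtain ⟨a, ⟨ha, G, i, j, hG, rfl⟩, hmin⟩ := EuclideanDomain.r_wellFounded.has_min T hT
  have hbound : IsEntryLowerBound (G i j) G := fun H i' j' hH h0 =>
    hmin _ ⟨h0, H, i', j', hG.trans hH, rfl⟩
  exact ⟨G, i, j, hG, hbound.dvd_apply ha rfl⟩

theorem hasUnitPivots_of_euclideanDomain : HasUnitPivots R := by
  intro l F hF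
  have hF0 : F ≠ 0 := by
    rintro rfl
    exact bot_ne_top (top_le_iff.1 (hF ▸ minorsIdeal_one_le_iff.2 fun _ _ => zero_mem _))
  obtain ⟨G, i, j, hFG, hdvd⟩ := exists_matrixEquiv_apply_dvd hF0
  refine ⟨G, i, j, hFG, ?_⟩
  rw [← Ideal.span_singleton_eq_top, ← top_le_iff, ← hF, hFG.minorsIdeal_eq]
  exact minorsIdeal_one_le_iff.2 fun i' j' => Ideal.mem_span_singleton.2 (hdvd i' j')

end EuclideanElimination

section MonicIdeals

variable {R : Type*} [CommRing R] [IsLocalRing R]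

-- Modulo a monic polynomial `R[X]` is integral over `R`, so a maximal ideal containing one lies
-- over the maximal ideal of `R`.
theorem eq_top_of_monic_mem {J : Ideal R[X]} {f : R[X]} (hf : f.Monic) (hfJ : f ∈ J)
    (h : ∀ M : Ideal R[X], M.IsMaximal → (IsLocalRing.maximalIdeal R).map C ≤ M → ¬ J ≤ M) :
    J = ⊤ := by
  by_contra hJ
  obtain ⟨M, hM, hJM⟩ := Ideal.exists_le_maximal J hJ
  have hintegral := hf.quotient_isIntegral (hJM hfJ)
  have hbot : (⊥ : Ideal (R[X] ⧸ M)).IsMaximal :=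
    let _ := Ideal.Quotient.field M
    Ideal.bot_isMaximal
  have hcomap := Ideal.isMaximal_comap_of_isIntegral_of_isMaximal' _ hintegral ⊥
  refine h M hM ?_ hJM
  rw [Ideal.map_le_iff_le_comap, ← IsLocalRing.eq_maximalIdeal hcomap]
  exact fun r hr => (Ideal.Quotient.eq_zero_iff_mem (I := M) (a := C r)).1 hr

theorem mem_map_C_maximalIdeal_iff {a : R[X]} :
    a ∈ (IsLocalRing.maximalIdeal R).map (C : R →+* R[X]) ↔
      a.map (IsLocalRing.residue R) = 0 := by
  rw [Ideal.mem_map_C_iff, Polynomial.ext_iff]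
  simp [IsLocalRing.residue_eq_zero_iff]

theorem map_mk_degreeLT_eq_top {I : Ideal R[X]} {f g : R[X]} (hf : f.Monic) (hfI : f ∈ I)
    (hgI : g ∈ I) (hg : (g.map (IsLocalRing.residue R)).Monic) :
    (degreeLT R (g.map (IsLocalRing.residue R)).natDegree).map
      (Ideal.Quotient.mkₐ R I).toLinearMap = ⊤ := by
  obtain ⟨G, hGg, hGdeg, hG⟩ := lifts_and_natDegree_eq_and_monic (f := IsLocalRing.residue R)
    ((Polynomial.mem_lifts _).2 ⟨g, rfl⟩) hg
  have hfin : Module.Finite R (R[X] ⧸ I) := by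
    have := hf.finite_quotient
    have hle := (Ideal.span_singleton_le_iff_mem I).2 hfI
    exact Module.Finite.of_surjective (Ideal.Quotient.factorₐ R hle).toLinearMap
      (Ideal.Quotient.factor_surjective hle)
  -- Nakayama: every class is represented by a remainder modulo `G`, up to an element of
  -- `maximalIdeal R • ⊤`, because `g ∈ I` agrees with `G` modulo the maximal ideal.
  refine top_le_iff.1 (Submodule.le_of_le_smul_of_le_jacobson_bot
    (I := IsLocalRing.maximalIdeal R) Module.Finite.fg_top
    (IsLocalRing.maximalIdeal_le_jacobson _) ?_)
  rintro x -
  obtain ⟨a, rfl⟩ := Ideal.Quotient.mk_surjective x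
  have ha : Ideal.Quotient.mk I a = Ideal.Quotient.mk I (a %ₘ G) +
      Ideal.Quotient.mk I ((G - g) * (a /ₘ G)) := by
    rw [← map_add, Ideal.Quotient.mk_eq_mk_iff_sub_mem]
    convert I.mul_mem_right (a /ₘ G) hgI using 1
    linear_combination -modByMonic_add_div a G
  rw [ha]
  refine Submodule.add_mem_sup ⟨a %ₘ G, ?_, rfl⟩ ?_
  · rw [SetLike.mem_coe, mem_degreeLT, ← hGdeg, ← degree_eq_natDegree hG.ne_zero]
    exact degree_modByMonic_lt _ hG
  · have hmem : (G - g) * (a /ₘ G) ∈ (IsLocalRing.maximalIdeal R).map (C : R →+* R[X]) := by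
      rw [mem_map_C_maximalIdeal_iff, Polynomial.map_mul, Polynomial.map_sub, hGg, sub_self,
        zero_mul]
    rw [Ideal.smul_top_eq_map]
    have := Ideal.mem_map_of_mem (Ideal.Quotient.mk I) hmem
    rwa [Ideal.map_map] at this

theorem exists_monic_mem_natDegree_eq {I : Ideal R[X]} {f g : R[X]} (hf : f.Monic) (hfI : f ∈ I)
    (hgI : g ∈ I) (hg : (g.map (IsLocalRing.residue R)).Monic) :
    ∃ h ∈ I, h.Monic ∧ h.natDegree = (g.map (IsLocalRing.residue R)).natDegree := by
  set d := (g.map (IsLocalRing.residue R)).natDegree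
  obtain ⟨r, hr, hrX⟩ := (map_mk_degreeLT_eq_top hf hfI hgI hg).ge
    (Submodule.mem_top (x := Ideal.Quotient.mk I (X ^ d)))
  have hdeg : r.degree < d := mem_degreeLT.1 hr
  refine ⟨X ^ d - r, Ideal.Quotient.eq.1 hrX.symm, monic_X_pow_sub hdeg, ?_⟩
  exact natDegree_eq_of_degree_eq_some (by
    rw [degree_sub_eq_left_of_degree_lt (by rwa [degree_X_pow]), degree_X_pow])

theorem exists_monic_mem_map_dvd {I : Ideal R[X]} {f : R[X]} (hf : f.Monic) (hfI : f ∈ I) :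
    ∃ h ∈ I, h.Monic ∧
      ∀ a ∈ I, h.map (IsLocalRing.residue R) ∣ a.map (IsLocalRing.residue R) := by
  classical
  let ρ := IsLocalRing.residue R
  have hρ : Function.Surjective (mapRingHom ρ) :=
    Polynomial.map_surjective _ IsLocalRing.residue_surjective
  obtain ⟨g, hg⟩ := (IsPrincipalIdealRing.principal (I.map (mapRingHom ρ))).principal
  have hdvd : ∀ a ∈ I, g ∣ a.map ρ := fun a ha =>
    Ideal.mem_span_singleton.1 (hg.le (Ideal.mem_map_of_mem (mapRingHom ρ) ha))
  have hg0 : g ≠ 0 := fun h0 => (hf.map ρ).ne_zero (zero_dvd_iff.1 (h0 ▸ hdvd f hfI))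
  have hmonic : (normalize g).Monic := Polynomial.monic_normalize hg0
  obtain ⟨k, hkI, hk⟩ : ∃ k ∈ I, k.map ρ = normalize g :=
    (Ideal.mem_map_iff_of_surjective _ hρ).1
      (hg.ge <| Ideal.mem_span_singleton.2 (associated_normalize g).dvd)
  obtain ⟨h, hhI, hh, hdeg⟩ := exists_monic_mem_natDegree_eq hf hfI hkI (hk ▸ hmonic)
  have hhg : h.map ρ = normalize g := eq_of_monic_of_dvd_of_natDegree_le hmonic (hh.map ρ)
    (normalize_dvd_iff.2 (hdvd h hhI)) (by rw [hh.natDegree_map, hdeg, hk])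
  exact ⟨h, hhI, hh, fun a ha => hhg ▸ normalize_dvd_iff.2 (hdvd a ha)⟩

end MonicIdeals

section NearEquiv

variable {S : Type*} [CommRing S] {P Q P' : Type*} [AddCommGroup P] [Module S P]
  [AddCommGroup Q] [Module S Q] [AddCommGroup P'] [Module S P'] {l : ℕ} {w : S}

/-- Linear maps `P → Q` and `Q → P` that are inverse to each other up to the factor `w`: an
isomorphism after inverting `w`, with denominators cleared. -/
structure NearEquiv (w : S) (P Q : Type*) [AddCommGroup P] [Module S P] [AddCommGroup Q]
    [Module S Q] where
  toMap : P →ₗ[S] Q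
  invMap : Q →ₗ[S] P
  invMap_toMap : ∀ a, invMap (toMap a) = w • a
  toMap_invMap : ∀ x, toMap (invMap x) = w • x

/-- The projection onto the kernel of `χ` along `e`, if `χ e = 1`. -/
def kerProj (χ : P →ₗ[S] S) (e : P) (he : χ e = 1) : P →ₗ[S] LinearMap.ker χ :=
  (LinearMap.id - χ.smulRight e).codRestrict _ fun a => by simp [he]

@[simp] theorem coe_kerProj (χ : P →ₗ[S] S) (e : P) (he : χ e = 1) (a : P) :
    (kerProj χ e he a : P) = a - χ a • e := rfl

namespace NearEquiv

/-- Composition of a near-equivalence with an equivalence. -/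
def transEquiv (v : NearEquiv w P Q) (e : Q ≃ₗ[S] P') : NearEquiv w P P' where
  toMap := e.toLinearMap ∘ₗ v.toMap
  invMap := v.invMap ∘ₗ e.symm.toLinearMap
  invMap_toMap a := by simp [v.invMap_toMap]
  toMap_invMap x := by simp [v.toMap_invMap]

theorem smul_eq_sum (v : NearEquiv w P (Fin l → S)) (e : P) :
    w • e = ∑ i, v.toMap e i • v.invMap (Pi.single i 1) := by
  rw [← v.invMap_toMap]
  conv_lhs => rw [pi_eq_sum_univ' (v.toMap e), map_sum]
  simp only [map_smul]

theorem subsingleton [IsDomain S] [Module.IsTorsionFree S P] [Subsingleton Q]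
    (v : NearEquiv w P Q) (hw : w ≠ 0) : Subsingleton P :=
  ⟨fun a b => smul_right_injective P hw <| by
    change w • a = w • b
    rw [← v.invMap_toMap, ← v.invMap_toMap, Subsingleton.elim (v.toMap a) (v.toMap b)]⟩

/-- Near-coordinates on the kernel of `χ` induced by near-coordinates `v` on `P`, if `χ e = 1`:
the coordinates of `v 0 e • a - v 0 a • e`, whose coordinate of index `0` vanishes. -/
@[simps toMap]
def ker (v : NearEquiv w P (Fin (l + 1) → S)) (χ : P →ₗ[S] S) (e : P) (he : χ e = 1) {c : S}
    (hc : v.toMap e 0 = c) : NearEquiv (c * w) (LinearMap.ker χ) (Fin l → S) where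
  toMap := LinearMap.funLeft S S Fin.succ ∘ₗ (c • v.toMap -
    (LinearMap.proj 0 ∘ₗ v.toMap).smulRight (v.toMap e)) ∘ₗ (LinearMap.ker χ).subtype
  invMap := kerProj χ e he ∘ₗ v.invMap ∘ₗ
    (Fin.consLinearEquiv S fun _ : Fin (l + 1) => S).toLinearMap ∘ₗ LinearMap.inr S S (Fin l → S)
  invMap_toMap a := by
    have hcons : (Fin.cons 0 fun i : Fin l => c * v.toMap a i.succ -
        v.toMap a 0 * v.toMap e i.succ : Fin (l + 1) → S) =
        c • v.toMap a - v.toMap (a : P) 0 • v.toMap e := by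
      ext i
      refine Fin.cases ?_ (fun i => ?_) i
      · simp [hc, mul_comm]
      · simp
    have ha : χ (a : P) = 0 := a.2
    apply Subtype.ext
    change ((kerProj χ e he (v.invMap (Fin.cons 0 _)) : LinearMap.ker χ) : P) = _
    refine (congrArg (fun x => (kerProj χ e he (v.invMap x) : P)) hcons).trans ?_
    simp only [map_sub, map_smul, v.invMap_toMap]
    simp [ha, he, mul_smul]
  toMap_invMap x := by
    ext i
    change c * v.toMap (kerProj χ e he (v.invMap (Fin.cons 0 x))) i.succ -
      v.toMap (kerProj χ e he (v.invMap (Fin.cons 0 x))) 0 * v.toMap e i.succ = c * w * x i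
    simp only [coe_kerProj, map_sub, map_smul, v.toMap_invMap, Pi.sub_apply, Pi.smul_apply,
      smul_eq_mul, Fin.cons_zero, Fin.cons_succ, hc]
    ring

end NearEquiv

/-- Coordinates on `P` from coordinates on the kernel of `χ`, if `χ e = 1`. -/
def consCoord (χ : P →ₗ[S] S) (e : P) (he : χ e = 1) (v : LinearMap.ker χ ≃ₗ[S] (Fin l → S)) :
    P ≃ₗ[S] (Fin (l + 1) → S) where
  toFun a := Fin.cons (χ a) (v (kerProj χ e he a))
  invFun x := x 0 • e + v.symm (Fin.tail x)
  map_add' a b := by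
    ext i
    refine Fin.cases ?_ (fun i => ?_) i <;> simp
  map_smul' c a := by
    ext i
    refine Fin.cases ?_ (fun i => ?_) i <;> simp
  left_inv a := by simp
  right_inv x := by
    have hχ : χ (x 0 • e + v.symm (Fin.tail x)) = x 0 := by simp [he]
    have hproj : kerProj χ e he (x 0 • e + v.symm (Fin.tail x)) = v.symm (Fin.tail x) :=
      Subtype.ext <| by rw [coe_kerProj, hχ, add_sub_cancel_left]
    change Fin.cons (χ _) (v (kerProj χ e he _)) = x
    rw [hχ, hproj, v.apply_symm_apply, Fin.cons_self_tail]

end NearEquiv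

section NearDiag

variable {S : Type*} [CommRing S] {P Q : Type*} [AddCommGroup P] [Module S P] [AddCommGroup Q]
  [Module S Q] {l : ℕ} {w : S}

/-- Near-coordinates on `P` and `Q` in which `φ` is the diagonal map with entries `q`: a
diagonalization of `φ` after inverting `w`, with denominators cleared. -/
structure NearDiag (w : S) (q : Fin l → S) (φ : P →ₗ[S] Q) where
  v : NearEquiv w P (Fin l → S)
  u : NearEquiv w Q (Fin l → S)
  u_apply : ∀ a i, u.toMap (φ a) i = q i * v.toMap a i

/-- The linear map `φ` is diagonal with entries `q` in suitable bases of `P` and `Q`. -/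
def IsDiagonalizable (q : Fin l → S) (φ : P →ₗ[S] Q) : Prop :=
  ∃ (v : P ≃ₗ[S] (Fin l → S)) (u : Q ≃ₗ[S] (Fin l → S)), ∀ a i, u (φ a) i = q i * v a i

/-- The restriction of `φ` to the kernels of `ψ ∘ φ` and `ψ`. -/
def kerRestrict (φ : P →ₗ[S] Q) (ψ : Q →ₗ[S] S) : LinearMap.ker (ψ ∘ₗ φ) →ₗ[S] LinearMap.ker ψ :=
  φ.restrict fun _ ha => ha

@[simp] theorem coe_kerRestrict (φ : P →ₗ[S] Q) (ψ : Q →ₗ[S] S) (a : LinearMap.ker (ψ ∘ₗ φ)) :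
    (kerRestrict φ ψ a : Q) = φ a := rfl

namespace NearDiag

theorem exists_reindex {q : Fin l → S} {φ : P →ₗ[S] Q} (D : NearDiag w q φ)
    (σ : Equiv.Perm (Fin l)) (hσ : ∀ i, Associated (q (σ i)) (q i)) :
    ∃ D' : NearDiag w q φ, ∀ a i, D'.v.toMap a i = D.v.toMap a (σ i) := by
  choose c hc using hσ
  refine ⟨⟨D.v.transEquiv (LinearEquiv.funCongrLeft S S σ),
    D.u.transEquiv ((LinearEquiv.funCongrLeft S S σ).trans
      (LinearEquiv.piCongrRight fun i => LinearEquiv.smulOfUnit (c i))), fun a i => ?_⟩,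
    fun a i => rfl⟩
  change (c i : S) * D.u.toMap (φ a) (σ i) = q i * D.v.toMap a (σ i)
  rw [D.u_apply, ← hc i]
  ring

/-- Cancel a common factor of the map and the diagonal entries. -/
def ofSMul [IsDomain S] {c : S} (hc : c ≠ 0) {q q' : Fin l → S} (hq : ∀ i, q i = c * q' i)
    {φ : P →ₗ[S] Q} (D : NearDiag w q (c • φ)) : NearDiag w q' φ where
  __ := D
  u_apply a i := mul_left_cancel₀ hc (by simpa [hq, mul_assoc] using D.u_apply a i)

theorem apply_invMap_single [IsDomain S] [Module.IsTorsionFree S Q] (hw : w ≠ 0) {q : Fin l → S}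
    {φ : P →ₗ[S] Q} (D : NearDiag w q φ) (i : Fin l) :
    φ (D.v.invMap (Pi.single i 1)) = q i • D.u.invMap (Pi.single i 1) := by
  have hu : D.u.toMap (φ (D.v.invMap (Pi.single i 1))) = (w * q i) • Pi.single i 1 := by
    ext j
    rw [D.u_apply, D.v.toMap_invMap]
    obtain rfl | hij := eq_or_ne j i
    · simp [mul_comm]
    · simp [hij]
  apply smul_right_injective Q hw
  change w • _ = w • _
  rw [← D.u.invMap_toMap, hu, map_smul, mul_smul]

theorem smul_apply_mem_range {c : S} {q q' : Fin l → S} (hq : ∀ i, q i = c * q' i)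
    {φ : P →ₗ[S] Q} (D : NearDiag w q φ) (a : P) :
    w • φ a ∈ LinearMap.range (LinearMap.lsmul S Q c) := by
  refine ⟨D.u.invMap fun i => q' i * D.v.toMap a i, ?_⟩
  rw [LinearMap.lsmul_apply, ← map_smul, ← D.u.invMap_toMap]
  congr 1
  ext i
  rw [D.u_apply, hq, Pi.smul_apply, smul_eq_mul, mul_assoc]

/-- Split off the coordinate of index `0`. -/
def ker {q : Fin (l + 1) → S} {φ : P →ₗ[S] Q} (D : NearDiag w q φ) (hq : q 0 = 1)
    (ψ : Q →ₗ[S] S) (e : P) (he : ψ (φ e) = 1) :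
    NearDiag (D.v.toMap e 0 * w) (fun i => q i.succ) (kerRestrict φ ψ) where
  v := D.v.ker (ψ ∘ₗ φ) e he rfl
  u := D.u.ker ψ (φ e) he (by rw [D.u_apply, hq, one_mul])
  u_apply a i := by
    simp only [NearEquiv.ker_toMap, LinearMap.comp_apply, Submodule.subtype_apply,
      LinearMap.funLeft_apply, LinearMap.sub_apply, LinearMap.smul_apply,
      LinearMap.smulRight_apply, LinearMap.proj_apply, Pi.sub_apply, Pi.smul_apply, smul_eq_mul,
      coe_kerRestrict, D.u_apply, hq]
    ring

end NearDiag

namespace IsDiagonalizable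

theorem smul {q q' : Fin l → S} {φ : P →ₗ[S] Q} (h : IsDiagonalizable q φ) {c : S}
    (hq : ∀ i, q' i = c * q i) : IsDiagonalizable q' (c • φ) := by
  obtain ⟨v, u, huv⟩ := h
  exact ⟨v, u, fun a i => by simp [huv, hq, mul_assoc]⟩

theorem of_kerRestrict {q : Fin (l + 1) → S} {φ : P →ₗ[S] Q} (hq : q 0 = 1) {ψ : Q →ₗ[S] S}
    {e : P} (he : ψ (φ e) = 1) (h : IsDiagonalizable (fun i => q i.succ) (kerRestrict φ ψ)) :
    IsDiagonalizable q φ := by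
  obtain ⟨v, u, huv⟩ := h
  refine ⟨consCoord (ψ ∘ₗ φ) e he v, consCoord ψ (φ e) he u, fun a i => ?_⟩
  have hproj : kerProj ψ (φ e) he (φ a) = kerRestrict φ ψ (kerProj (ψ ∘ₗ φ) e he a) :=
    Subtype.ext (by simp)
  change (Fin.cons (ψ (φ a)) (u (kerProj ψ (φ e) he (φ a))) : Fin (l + 1) → S) i =
    q i * (Fin.cons (ψ (φ a)) (v (kerProj (ψ ∘ₗ φ) e he a)) : Fin (l + 1) → S) i
  refine Fin.cases ?_ (fun i => ?_) i
  · simp [hq]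
  · rw [hproj, Fin.cons_succ, Fin.cons_succ, huv]

end IsDiagonalizable

end NearDiag

section Horrocks

variable {R : Type*} [CommRing R] [IsLocalRing R] {P Q : Type*} [AddCommGroup P] [Module R[X] P]
  [AddCommGroup Q] [Module R[X] Q] {l : ℕ}

/-- The map `φ` over `R[X]`, where `R` is local, becomes diagonal with entries `q` after inverting
some monic polynomial, and also locally at every maximal ideal of `R[X]` over that of `R`. -/
structure IsLocallyDiagonal (q : Fin l → R) (φ : P →ₗ[R[X]] Q) : Prop where
  exists_monic : ∃ f : R[X], f.Monic ∧ Nonempty (NearDiag f (fun i => C (q i)) φ)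
  exists_notMem : ∀ M : Ideal R[X], M.IsMaximal → (IsLocalRing.maximalIdeal R).map C ≤ M →
    ∃ w ∉ M, Nonempty (NearDiag w (fun i => C (q i)) φ)

theorem mem_of_map_residue_mem {M : Ideal R[X]} (hM : (IsLocalRing.maximalIdeal R).map C ≤ M)
    {w : R[X]} (hw : w.map (IsLocalRing.residue R) ∈
      M.map (mapRingHom (IsLocalRing.residue R))) : w ∈ M := by
  obtain ⟨m, hm, hmw⟩ := (Ideal.mem_map_iff_of_surjective _
    (Polynomial.map_surjective _ IsLocalRing.residue_surjective)).1 hw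
  refine (Submodule.sub_mem_iff_left M hm).1 (hM (mem_map_C_maximalIdeal_iff.2 ?_))
  rw [Polynomial.map_sub, ← hmw, coe_mapRingHom, sub_self]

variable [IsDomain R]

theorem NearDiag.exists_isUnit_notMem [Module.IsTorsionFree R[X] Q] {q : Fin l → R}
    {φ : P →ₗ[R[X]] Q} {w : R[X]} (D : NearDiag w (fun i => C (q i)) φ) {M : Ideal R[X]}
    (hM : (IsLocalRing.maximalIdeal R).map C ≤ M) (hw : w ∉ M) {β : Q →ₗ[R[X]] R[X]} {e : P}
    (he : (β (φ e)).Monic) (hdvd : ∀ a, (β (φ e)).map (IsLocalRing.residue R) ∣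
      (β (φ a)).map (IsLocalRing.residue R)) :
    ∃ i, IsUnit (q i) ∧ D.v.toMap e i ∉ M := by
  by_contra! hcon
  let ρ := mapRingHom (IsLocalRing.residue R)
  have hw0 : w ≠ 0 := fun h => hw (h ▸ M.zero_mem)
  -- Modulo the maximal ideal of `R`, only the coordinates with invertible entry contribute.
  have hmem : ρ w * ρ (β (φ e)) ∈ Ideal.span {ρ (β (φ e))} * M.map ρ := by
    have hsum := congrArg (fun a => ρ (β (φ a))) (D.v.smul_eq_sum e)
    simp only [map_smul, map_sum, smul_eq_mul, map_mul] at hsum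
    rw [hsum]
    refine Ideal.sum_mem _ fun i _ => ?_
    by_cases hi : IsUnit (q i)
    · rw [mul_comm (ρ _)]
      exact Ideal.mul_mem_mul (Ideal.mem_span_singleton.2 (hdvd (D.v.invMap (Pi.single i 1))))
        (Ideal.mem_map_of_mem ρ (hcon i hi))
    · have hzero : ρ (C (q i)) = 0 := by
        simp [ρ, (IsLocalRing.residue_eq_zero_iff _).2 ((IsLocalRing.mem_maximalIdeal _).2 hi)]
      rw [D.apply_invMap_single hw0, map_smul, smul_eq_mul, map_mul, hzero, zero_mul, mul_zero]
      exact Ideal.zero_mem _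
  obtain ⟨m, hm, hmw⟩ := Ideal.mem_span_singleton_mul.1 hmem
  obtain rfl : m = ρ w := mul_left_cancel₀ (he.map _).ne_zero (hmw.trans (mul_comm _ _))
  exact hw (mem_of_map_residue_mem hM hm)

theorem NearDiag.exists_notMem_zero [Module.IsTorsionFree R[X] Q] {q : Fin (l + 1) → R}
    (hq0 : q 0 = 1) {φ : P →ₗ[R[X]] Q} {w : R[X]} (D : NearDiag w (fun i => C (q i)) φ)
    {M : Ideal R[X]} (hM : (IsLocalRing.maximalIdeal R).map C ≤ M) (hw : w ∉ M)
    {β : Q →ₗ[R[X]] R[X]} {e : P} (he : (β (φ e)).Monic)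
    (hdvd : ∀ a, (β (φ e)).map (IsLocalRing.residue R) ∣
      (β (φ a)).map (IsLocalRing.residue R)) :
    ∃ D' : NearDiag w (fun i => C (q i)) φ, D'.v.toMap e 0 ∉ M := by
  obtain ⟨i, hi, hei⟩ := D.exists_isUnit_notMem hM hw he hdvd
  have hunit : Associated (C (q i) : R[X]) (C (q 0)) := by
    rw [hq0, C_1]
    exact associated_one_iff_isUnit.2 (hi.map C)
  have hassoc : ∀ j, Associated (C (q (Equiv.swap 0 i j)) : R[X]) (C (q j)) := fun j => by
    rw [Equiv.swap_apply_def]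
    split_ifs with h₀ hᵢ
    · rwa [h₀]
    · rw [hᵢ]
      exact hunit.symm
    · rfl
  obtain ⟨D', hD'⟩ := D.exists_reindex _ hassoc
  exact ⟨D', by rwa [hD', Equiv.swap_apply_left]⟩

namespace IsLocallyDiagonal

theorem exists_eq_smul [Module.IsTorsionFree R[X] Q] {q q' : Fin l → R} {c : R} (hc : c ≠ 0)
    (hq : ∀ i, q i = c * q' i) {φ : P →ₗ[R[X]] Q} (h : IsLocallyDiagonal q φ) :
    ∃ φ₀ : P →ₗ[R[X]] Q, φ = (C c : R[X]) • φ₀ ∧ IsLocallyDiagonal q' φ₀ := by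
  have hc' : (C c : R[X]) ≠ 0 := C_ne_zero.2 hc
  have hCq : ∀ i, (C (q i) : R[X]) = C c * C (q' i) := fun i => by rw [hq, C_mul]
  let J := (LinearMap.range (LinearMap.lsmul R[X] Q (C c))).colon (LinearMap.range φ : Set Q)
  have hJ : ∀ w, Nonempty (NearDiag w (fun i => C (q i)) φ) → w ∈ J := by
    rintro w ⟨D⟩
    refine Submodule.mem_colon.2 ?_
    rintro _ ⟨a, rfl⟩
    exact D.smul_apply_mem_range hCq a
  obtain ⟨f, hf, hfD⟩ := h.exists_monic
  have htop : J = ⊤ := eq_top_of_monic_mem hf (hJ f hfD) fun M h₁ h₂ hJM => by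
    obtain ⟨w, hw, hwD⟩ := h.exists_notMem M h₁ h₂
    exact hw (hJM (hJ w hwD))
  have hrange : ∀ a, φ a ∈ LinearMap.range (LinearMap.lsmul R[X] Q (C c)) := fun a => by
    simpa using Submodule.mem_colon.1 (htop ▸ Submodule.mem_top : (1 : R[X]) ∈ J) (φ a) ⟨a, rfl⟩
  obtain ⟨φ₀, rfl⟩ : ∃ φ₀ : P →ₗ[R[X]] Q, φ = (C c : R[X]) • φ₀ :=
    ⟨φ.codRestrictOfInjective _ (smul_right_injective Q hc') hrange, LinearMap.ext fun a =>
      (LinearMap.codRestrictOfInjective_comp_apply φ _ (smul_right_injective Q hc') hrange a).symm⟩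
  exact ⟨φ₀, rfl, h.exists_monic.imp fun f => .imp_right (.map (NearDiag.ofSMul hc' hCq)),
    fun M h₁ h₂ => (h.exists_notMem M h₁ h₂).imp fun w =>
      .imp_right (.map (NearDiag.ofSMul hc' hCq))⟩

theorem exists_isLocallyDiagonal_kerRestrict [Module.IsTorsionFree R[X] Q] {q : Fin (l + 1) → R}
    (hq0 : q 0 = 1) {φ : P →ₗ[R[X]] Q} (h : IsLocallyDiagonal q φ) :
    ∃ (ψ : Q →ₗ[R[X]] R[X]) (e : P), ψ (φ e) = 1 ∧
      IsLocallyDiagonal (fun i => q i.succ) (kerRestrict φ ψ) := by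
  have hCq0 : (C (q 0) : R[X]) = 1 := by rw [hq0, C_1]
  obtain ⟨f, hf, ⟨D⟩⟩ := h.exists_monic
  obtain ⟨β, hβ⟩ : ∃ β : Q →ₗ[R[X]] R[X], ∀ a, β (φ a) = D.v.toMap a 0 :=
    ⟨LinearMap.proj 0 ∘ₗ D.u.toMap, fun a => by simp [D.u_apply, hq0]⟩
  obtain ⟨_, ⟨e, rfl⟩, he, hdvd⟩ := exists_monic_mem_map_dvd (I := LinearMap.range (β ∘ₗ φ)) hf
    ⟨D.v.invMap (Pi.single 0 1), by simp [hβ, D.v.toMap_invMap]⟩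
  have hloc : ∀ M : Ideal R[X], M.IsMaximal → (IsLocalRing.maximalIdeal R).map C ≤ M →
      ∃ w ∉ M, ∃ E : NearDiag w (fun i => C (q i)) φ, E.v.toMap e 0 ∉ M := fun M h₁ h₂ => by
    obtain ⟨w, hw, ⟨E⟩⟩ := h.exists_notMem M h₁ h₂
    exact ⟨w, hw, E.exists_notMem_zero hq0 h₂ hw he fun a =>
      hdvd _ (LinearMap.mem_range_self (β ∘ₗ φ) a)⟩
  have htop : LinearMap.range (Module.Dual.eval R[X] Q (φ e)) = ⊤ :=
    eq_top_of_monic_mem he ⟨β, rfl⟩ fun M h₁ h₂ hle => by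
      obtain ⟨w, -, E, hE⟩ := hloc M h₁ h₂
      exact hE (hle ⟨LinearMap.proj 0 ∘ₗ E.u.toMap, by simp [E.u_apply, hq0]⟩)
  obtain ⟨ψ, hψ⟩ := LinearMap.range_eq_top.1 htop 1
  refine ⟨ψ, e, hψ, ⟨_, ?_, ⟨D.ker hCq0 ψ e hψ⟩⟩, fun M h₁ h₂ => ?_⟩
  · rw [LinearMap.comp_apply, hβ] at he
    exact he.mul hf
  · obtain ⟨w, hw, E, hE⟩ := hloc M h₁ h₂
    exact ⟨_, h₁.isPrime.mul_notMem hE hw, ⟨E.ker hCq0 ψ e hψ⟩⟩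

theorem isDiagonalizable {q : Fin l → R} (hq0 : ∀ i, q i ≠ 0) (hq : ∀ i j, i ≤ j → q i ∣ q j)
    [Module.IsTorsionFree R[X] P] [Module.IsTorsionFree R[X] Q] {φ : P →ₗ[R[X]] Q}
    (h : IsLocallyDiagonal q φ) : IsDiagonalizable (fun i => (C (q i) : R[X])) φ := by
  induction l generalizing P Q with
  | zero =>
    obtain ⟨f, hf, ⟨D⟩⟩ := h.exists_monic
    have := D.v.subsingleton hf.ne_zero
    have := D.u.subsingleton hf.ne_zero
    exact ⟨LinearEquiv.ofSubsingleton _ _, LinearEquiv.ofSubsingleton _ _, fun _ i => i.elim0⟩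
  | succ l ih =>
    choose q' hq' using fun i => hq 0 i (Fin.zero_le i)
    have hq'0 : q' 0 = 1 := mul_left_cancel₀ (hq0 0) (by rw [← hq', mul_one])
    obtain ⟨φ₀, rfl, h₀⟩ := h.exists_eq_smul (hq0 0) hq'
    obtain ⟨ψ, e, hψ, hker⟩ := h₀.exists_isLocallyDiagonal_kerRestrict hq'0
    have hdiag := ih (fun i => right_ne_zero_of_mul (hq' i.succ ▸ hq0 i.succ))
      (fun i j hij => (mul_dvd_mul_iff_left (hq0 0)).1 (by
        rw [← hq', ← hq']; exact hq _ _ (Fin.succ_le_succ_iff.2 hij))) hker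
    have hdiag₀ : IsDiagonalizable (fun i => (C (q' i) : R[X])) φ₀ :=
      .of_kerRestrict (by rw [hq'0, C_1]) hψ hdiag
    exact hdiag₀.smul fun i => by rw [← C_mul, ← hq']

end IsLocallyDiagonal

end Horrocks

section MatrixNearDiag

variable {S S' : Type*} [CommRing S] [CommRing S'] {l : ℕ} {w : S} {q : Fin l → S}
  {F : Matrix (Fin l) (Fin l) S}

/-- The matrix form of `NearDiag`: matrices diagonalizing `F` that are invertible up to the
factor `w`. -/
def MatrixNearDiag (w : S) (q : Fin l → S) (F : Matrix (Fin l) (Fin l) S) : Prop :=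
  ∃ U U' V V' : Matrix (Fin l) (Fin l) S, U * U' = w • 1 ∧ U' * U = w • 1 ∧
    V * V' = w • 1 ∧ V' * V = w • 1 ∧ U * F = Matrix.diagonal q * V

namespace MatrixNearDiag

theorem map (h : MatrixNearDiag w q F) (θ : S →+* S') :
    MatrixNearDiag (θ w) (fun i => θ (q i)) (F.map θ) := by
  obtain ⟨U, U', V, V', hUU', hU'U, hVV', hV'V, hUF⟩ := h
  have hw : (w • (1 : Matrix (Fin l) (Fin l) S)).map θ = θ w • 1 := by
    rw [Matrix.map_smul' _ _ _ (map_mul θ), Matrix.map_one _ (map_zero θ) (map_one θ)]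
  refine ⟨U.map θ, U'.map θ, V.map θ, V'.map θ, ?_, ?_, ?_, ?_, ?_⟩
  · rw [← Matrix.map_mul, hUU', hw]
  · rw [← Matrix.map_mul, hU'U, hw]
  · rw [← Matrix.map_mul, hVV', hw]
  · rw [← Matrix.map_mul, hV'V, hw]
  · rw [← Matrix.map_mul, hUF, Matrix.map_mul, Matrix.diagonal_map (map_zero θ)]

theorem mul_weight (h : MatrixNearDiag w q F) (c : S) : MatrixNearDiag (c * w) q F := by
  obtain ⟨U, U', V, V', hUU', hU'U, hVV', hV'V, hUF⟩ := h
  refine ⟨U, c • U', V, c • V', ?_, ?_, ?_, ?_, hUF⟩ <;>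
    simp only [Matrix.mul_smul, Matrix.smul_mul, *, smul_smul]

theorem nonempty_nearDiag (h : MatrixNearDiag w q F) : Nonempty (NearDiag w q F.mulVecLin) := by
  obtain ⟨U, U', V, V', hUU', hU'U, hVV', hV'V, hUF⟩ := h
  have hmulVec {M N : Matrix (Fin l) (Fin l) S} (hMN : M * N = w • 1) (a : Fin l → S) :
      M.mulVecLin (N.mulVecLin a) = w • a := by
    simp [hMN, Matrix.smul_mulVec]
  refine ⟨⟨⟨V.mulVecLin, V'.mulVecLin, hmulVec hV'V, hmulVec hVV'⟩,
    ⟨U.mulVecLin, U'.mulVecLin, hmulVec hU'U, hmulVec hUU'⟩, fun a i => ?_⟩⟩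
  simp only [Matrix.mulVecLin_apply, Matrix.mulVec_mulVec, hUF]
  rw [← Matrix.mulVec_mulVec, Matrix.mulVec_diagonal]

end MatrixNearDiag

theorem IsDiagonalizable.matrixEquiv (h : IsDiagonalizable q F.mulVecLin) :
    MatrixEquiv F (Matrix.diagonal q) := by
  obtain ⟨v, u, huv⟩ := h
  have hdet (e : (Fin l → S) ≃ₗ[S] (Fin l → S)) :
      IsUnit (LinearMap.toMatrix' e.toLinearMap).det := by
    rw [LinearMap.det_toMatrix']
    exact e.isUnit_det'
  refine ⟨LinearMap.toMatrix' u.symm, LinearMap.toMatrix' v, hdet _, hdet _, ?_⟩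
  apply Matrix.toLin'.injective
  rw [Matrix.toLin'_mul, Matrix.toLin'_mul, Matrix.toLin'_toMatrix', Matrix.toLin'_toMatrix']
  refine LinearMap.ext fun a => (u.symm_apply_eq.2 (funext fun i => ?_)).symm
  exact (Matrix.mulVec_diagonal _ _ _).trans (huv a i).symm

theorem exists_matrix_map_eq_smul (W : Submonoid S) [Algebra S S']
    [IsLocalization W S'] {ι : Type*} [Finite ι] (M : ι → Matrix (Fin l) (Fin l) S') :
    ∃ w ∈ W, ∃ N : ι → Matrix (Fin l) (Fin l) S,
      ∀ k, (N k).map (algebraMap S S') = algebraMap S S' w • M k := by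
  obtain ⟨w, hw⟩ := IsLocalization.exist_integer_multiples_of_finite W
    fun x : ι × Fin l × Fin l => M x.1 x.2.1 x.2.2
  choose N hN using hw
  refine ⟨w, w.2, fun k => Matrix.of fun i j => N (k, i, j), fun k => ?_⟩
  ext i j
  simpa [Algebra.smul_def] using hN (k, i, j)

theorem exists_matrixNearDiag_of_isLocalization (W : Submonoid S) (hW : W ≤ nonZeroDivisors S)
    [Algebra S S'] [IsLocalization W S']
    (h : MatrixEquiv (F.map (algebraMap S S'))
      (Matrix.diagonal fun i => algebraMap S S' (q i))) :
    ∃ w ∈ W, MatrixNearDiag w q F := by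
  obtain ⟨U, V, hU, hV, hUV⟩ := h
  obtain ⟨w, hw, T, hT⟩ := exists_matrix_map_eq_smul W ![U⁻¹, U, V, V⁻¹]
  have hinj : Function.Injective fun M : Matrix (Fin l) (Fin l) S => M.map (algebraMap S S') :=
    Matrix.map_injective (IsLocalization.injective S' hW)
  have hmul {a b : Fin 4} (hab : ![U⁻¹, U, V, V⁻¹] a * ![U⁻¹, U, V, V⁻¹] b = 1) :
      T a * T b = (w * w) • 1 := hinj <| by
    simp only [Matrix.map_mul, hT, Matrix.smul_mul, Matrix.mul_smul, hab, smul_smul,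
      Matrix.map_smul' _ _ _ (map_mul (algebraMap S S')), map_mul,
      Matrix.map_one _ (map_zero (algebraMap S S')) (map_one (algebraMap S S'))]
  refine ⟨w * w, W.mul_mem hw hw, T 0, T 1, T 2, T 3, hmul (Matrix.nonsing_inv_mul _ hU),
    hmul (Matrix.mul_nonsing_inv _ hU), hmul (Matrix.mul_nonsing_inv _ hV),
    hmul (Matrix.nonsing_inv_mul _ hV), hinj ?_⟩
  have hT0 : (T 0).map (algebraMap S S') = algebraMap S S' w • U⁻¹ := hT 0
  have hT2 : (T 2).map (algebraMap S S') = algebraMap S S' w • V := hT 2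
  simp only [Matrix.map_mul, hT0, hT2, hUV, Matrix.diagonal_map (map_zero (algebraMap S S'))]
  rw [Matrix.smul_mul, ← Matrix.mul_assoc, ← Matrix.mul_assoc, Matrix.nonsing_inv_mul _ hU,
    Matrix.one_mul, Matrix.mul_smul]

end MatrixNearDiag

section LocalHorrocks

variable {R : Type*} [CommRing R] [IsDomain R] [IsLocalRing R] {l : ℕ} {q : Fin l → R}
  {F : Matrix (Fin l) (Fin l) R[X]}

theorem HasDetDivisors.exists_notMem_matrixNearDiag {S : Type*} [CommRing S] [IsDomain S]
    {q : Fin l → S} {F : Matrix (Fin l) (Fin l) S} (hq0 : ∀ i, q i ≠ 0)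
    (hq : ∀ i j, i ≤ j → q i ∣ q j) (hF : HasDetDivisors q F) (M : Ideal S) [M.IsPrime] :
    ∃ w ∉ M, MatrixNearDiag w q F := by
  have hM := M.primeCompl_le_nonZeroDivisors
  have : IsDomain (Localization.AtPrime M) := IsLocalization.isDomain_localization hM
  have hinj : Function.Injective (algebraMap S (Localization.AtPrime M)) :=
    IsLocalization.injective _ hM
  exact exists_matrixNearDiag_of_isLocalization M.primeCompl hM <|
    (hasUnitPivots_of_isLocalRing).matrixEquiv_diagonal
      (fun i => (map_ne_zero_iff _ hinj).2 (hq0 i)) (fun i j hij => map_dvd _ (hq i j hij))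
      (hF.map _)

theorem HasDetDivisors.matrixEquiv_diagonal_of_monic (hq0 : ∀ i, q i ≠ 0)
    (hq : ∀ i j, i ≤ j → q i ∣ q j) (hF : HasDetDivisors (fun i => C (q i)) F) {f : R[X]}
    (hf : f.Monic) (hfF : MatrixNearDiag f (fun i => C (q i)) F) :
    MatrixEquiv F (Matrix.diagonal fun i => C (q i)) := by
  have hloc : IsLocallyDiagonal q F.mulVecLin :=
    { exists_monic := ⟨f, hf, hfF.nonempty_nearDiag⟩
      exists_notMem := fun M _ _ => by
        obtain ⟨w, hw, h⟩ := hF.exists_notMem_matrixNearDiag (fun i => C_ne_zero.2 (hq0 i))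
          (fun i j hij => map_dvd C (hq i j hij)) M
        exact ⟨w, hw, h.nonempty_nearDiag⟩ }
  exact (hloc.isDiagonalizable hq0 hq).matrixEquiv

end LocalHorrocks

section Patching

variable {R S T : Type*} [CommRing R] [CommRing S] [CommRing T] {l m : ℕ}

theorem map_map_ringHom (F : Matrix (Fin l) (Fin m) R) (f : R →+* S) (g : S →+* T) :
    (F.map f).map g = F.map (g.comp f) := rfl

theorem MatrixEquiv.exists_map_eq_mul_mul {F D : Matrix (Fin l) (Fin m) R} (h : MatrixEquiv F D)
    {σ κ : R →+* S} {ε : S →+* R} (hσ : ε.comp σ = .id R) (hκ : ε.comp κ = .id R)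
    (hD : D.map σ = D.map κ) :
    ∃ (G : Matrix (Fin l) (Fin l) S) (H : Matrix (Fin m) (Fin m) S), IsUnit G.det ∧
      IsUnit H.det ∧ G.map ε = 1 ∧ H.map ε = 1 ∧ F.map σ = G * F.map κ * H := by
  obtain ⟨U, V, hU, hV, rfl⟩ := h
  have hdet {k : ℕ} {M : Matrix (Fin k) (Fin k) R} (hM : IsUnit M.det) (τ : R →+* S) :
      IsUnit (M.map τ).det := by
    rw [← RingHom.mapMatrix_apply, ← RingHom.map_det]
    exact hM.map τ
  have hε {k : ℕ} (M : Matrix (Fin k) (Fin k) R) {τ : R →+* S} (hτ : ε.comp τ = .id R) :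
      (M.map τ).map ε = M := by
    rw [map_map_ringHom, hτ]
    exact M.map_id
  have hinv {k : ℕ} {M N : Matrix (Fin k) (Fin k) R} (hMN : M * N = 1) :
      M.map κ * N.map κ = 1 := by
    rw [← Matrix.map_mul, hMN, Matrix.map_one _ (map_zero κ) (map_one κ)]
  refine ⟨U.map σ * U⁻¹.map κ, V⁻¹.map κ * V.map σ, ?_, ?_, ?_, ?_, ?_⟩
  · rw [Matrix.det_mul]
    exact (hdet hU σ).mul (hdet (Matrix.isUnit_nonsing_inv_det U hU) κ)
  · rw [Matrix.det_mul]
    exact (hdet (Matrix.isUnit_nonsing_inv_det V hV) κ).mul (hdet hV σ)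
  · rw [Matrix.map_mul, hε _ hσ, hε _ hκ, Matrix.mul_nonsing_inv _ hU]
  · rw [Matrix.map_mul, hε _ hσ, hε _ hκ, Matrix.nonsing_inv_mul _ hV]
  · calc (U * D * V).map σ = U.map σ * ((1 : Matrix (Fin l) (Fin l) S) * D.map κ *
            (1 : Matrix (Fin m) (Fin m) S)) * V.map σ := by
          rw [Matrix.map_mul, Matrix.map_mul, hD, Matrix.one_mul, Matrix.mul_one]
      _ = U.map σ * ((U⁻¹.map κ * U.map κ) * D.map κ * (V.map κ * V⁻¹.map κ)) * V.map σ := by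
          rw [hinv (Matrix.nonsing_inv_mul _ hU), hinv (Matrix.mul_nonsing_inv _ hV)]
      _ = U.map σ * U⁻¹.map κ * (U * D * V).map κ * (V⁻¹.map κ * V.map σ) := by
          simp only [Matrix.map_mul, Matrix.mul_assoc]

/-- The substitution `X ↦ X + b Y`. -/
noncomputable def shiftHom (b : R) : R[X] →+* R[X][X] :=
  eval₂RingHom (C.comp C) (C X + C (C b) * X)

/-- The substitution `Y ↦ b Y`. -/
noncomputable def scaleHom (b : R) : R[X][X] →+* R[X][X] :=
  eval₂RingHom C (C (C b) * X)

@[simp] theorem shiftHom_C (b a : R) : shiftHom b (C a) = C (C a) := by simp [shiftHom]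

@[simp] theorem shiftHom_X (b : R) : shiftHom b X = C X + C (C b) * X := by simp [shiftHom]

@[simp] theorem scaleHom_C (b : R) (f : R[X]) : scaleHom b (C f) = C f := by simp [scaleHom]

@[simp] theorem scaleHom_X (b : R) : scaleHom b X = C (C b) * X := by simp [scaleHom]

theorem shiftHom_zero : shiftHom (0 : R) = C :=
  Polynomial.ringHom_ext (by simp) (by simp)

theorem evalRingHom_zero_comp_shiftHom (b : R) :
    (evalRingHom (0 : R[X])).comp (shiftHom b) = .id _ :=
  Polynomial.ringHom_ext (by simp) (by simp)

theorem evalRingHom_comp_C (f : R[X]) : (evalRingHom f).comp C = .id R[X] :=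
  RingHom.ext fun _ => by simp

theorem scaleHom_comp_C (b : R) : (scaleHom b).comp C = C :=
  RingHom.ext fun _ => by simp

theorem scaleHom_comp_shiftHom (b c : R) : (scaleHom b).comp (shiftHom c) = shiftHom (b * c) :=
  Polynomial.ringHom_ext (by simp) (by
    simp only [RingHom.coe_comp, Function.comp_apply, shiftHom_X, map_add, scaleHom_C, map_mul,
      scaleHom_X]
    ring)

theorem eval₂RingHom_shiftHom_comp_shiftHom (b c : R) :
    (eval₂RingHom (shiftHom b) X).comp (shiftHom c) = shiftHom (b + c) :=
  Polynomial.ringHom_ext (by simp) (by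
    simp only [RingHom.coe_comp, coe_eval₂RingHom, Function.comp_apply, shiftHom_X, eval₂_add,
      eval₂_C, eval₂_mul, shiftHom_C, eval₂_X, map_add]
    ring)

theorem mapRingHom_comp_shiftHom (θ : R →+* S) (b : R) :
    (mapRingHom (mapRingHom θ)).comp (shiftHom b) = (shiftHom (θ b)).comp (mapRingHom θ) :=
  Polynomial.ringHom_ext (by simp) (by simp)

theorem mapRingHom_comp_scaleHom (θ : R →+* S) (b : R) :
    (mapRingHom (mapRingHom θ)).comp (scaleHom b) =
      (scaleHom (θ b)).comp (mapRingHom (mapRingHom θ)) :=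
  Polynomial.ringHom_ext (by simp) (by simp)

/-- The elements `b` for which `F(X + b Y)` is equivalent to `F(X)`; the ideal through which
Quillen patching passes from local to global equivalence. -/
def shiftIdeal (F : Matrix (Fin l) (Fin m) R[X]) : Ideal R where
  carrier := {b | MatrixEquiv (F.map (shiftHom b)) (F.map (C : R[X] →+* R[X][X]))}
  zero_mem' := by
    rw [Set.mem_ofPred_eq, shiftHom_zero]
    exact .refl _
  add_mem' {b c} hb hc := by
    have h := MatrixEquiv.map (eval₂RingHom (shiftHom b) X) hc
    rw [map_map_ringHom, map_map_ringHom, eval₂RingHom_shiftHom_comp_shiftHom,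
      show (eval₂RingHom (shiftHom b) X).comp C = shiftHom b from RingHom.ext fun _ => by simp] at h
    exact h.trans hb
  smul_mem' r b hb := by
    have h := MatrixEquiv.map (scaleHom r) hb
    rwa [map_map_ringHom, map_map_ringHom, scaleHom_comp_shiftHom, scaleHom_comp_C] at h

section Localization

attribute [local instance] Polynomial.algebra Polynomial.isLocalization

variable (W : Submonoid R) [Algebra R S] [IsLocalization W S]

theorem exists_map_eq_map_scaleHom {G : Matrix (Fin l) (Fin l) S[X][X]}
    (hG : G.map (evalRingHom 0) = 1) :
    ∃ b ∈ W, ∀ c, b ∣ c → ∃ M : Matrix (Fin l) (Fin l) R[X][X],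
      M.map (mapRingHom (mapRingHom (algebraMap R S))) = G.map (scaleHom (algebraMap R S c)) := by
  obtain ⟨_, ⟨_, ⟨b, hb, rfl⟩, rfl⟩, N, hN⟩ :=
    exists_matrix_map_eq_smul (Submonoid.map C (Submonoid.map C W)) fun _ : Unit => G.map divX
  refine ⟨b, hb, ?_⟩
  rintro _ ⟨d, rfl⟩
  refine ⟨1 + (X * C (C d)) • (N ()).map (scaleHom (b * d)), ?_⟩
  set ι := algebraMap R S
  have hNij (i j : Fin l) : mapRingHom (mapRingHom ι) (N () i j) = C (C (ι b)) * (G i j).divX := by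
    simpa [Polynomial.algebraMap_def] using congrArg (fun M => M i j) (hN ())
  have hGij (i j : Fin l) : (G i j).coeff 0 = (1 : Matrix (Fin l) (Fin l) S[X]) i j := by
    rw [coeff_zero_eq_eval_zero, ← hG]
    rfl
  ext1 i j
  rw [Matrix.map_apply, Matrix.map_apply, ← divX_mul_X_add (G i j), hGij, Matrix.add_apply,
    Matrix.smul_apply, Matrix.map_apply, smul_eq_mul]
  have hone : mapRingHom (mapRingHom ι) ((1 : Matrix (Fin l) (Fin l) R[X][X]) i j) =
      scaleHom (ι (b * d)) (C ((1 : Matrix (Fin l) (Fin l) S[X]) i j)) := by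
    rw [scaleHom_C, Matrix.one_apply, Matrix.one_apply]
    split_ifs <;> simp
  have hscale : mapRingHom (mapRingHom ι) (scaleHom (b * d) (N () i j)) =
      scaleHom (ι (b * d)) (C (C (ι b)) * (G i j).divX) :=
    hNij i j ▸ RingHom.congr_fun (mapRingHom_comp_scaleHom ι (b * d)) (N () i j)
  rw [map_add, map_add, map_mul, hscale, hone]
  simp only [map_mul, coe_mapRingHom, map_X, map_C, scaleHom_C, scaleHom_X]
  ring

theorem exists_isUnit_map_eq_map_scaleHom (hW : W ≤ nonZeroDivisors R)
    {G : Matrix (Fin l) (Fin l) S[X][X]} (hG : G.map (evalRingHom 0) = 1) (hG' : IsUnit G.det) :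
    ∃ b ∈ W, ∀ c, b ∣ c → ∃ M : Matrix (Fin l) (Fin l) R[X][X], IsUnit M.det ∧
      M.map (mapRingHom (mapRingHom (algebraMap R S))) = G.map (scaleHom (algebraMap R S c)) := by
  have hGinv : G⁻¹.map (evalRingHom 0) = 1 := by
    have h := congrArg (fun M => M.map (evalRingHom (0 : S[X]))) (Matrix.mul_nonsing_inv _ hG')
    rwa [Matrix.map_mul, hG, Matrix.one_mul, Matrix.map_one _ (map_zero _) (map_one _)] at h
  obtain ⟨b, hb, hM⟩ := exists_map_eq_map_scaleHom W hG
  obtain ⟨b', hb', hM'⟩ := exists_map_eq_map_scaleHom W hGinv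
  refine ⟨b * b', W.mul_mem hb hb', fun c hc => ?_⟩
  obtain ⟨M, hM⟩ := hM c (dvd_of_mul_right_dvd hc)
  obtain ⟨M', hM'⟩ := hM' c (dvd_of_mul_left_dvd hc)
  have hinj : Function.Injective (mapRingHom (mapRingHom (algebraMap R S))) :=
    map_injective _ (map_injective _ (IsLocalization.injective S hW))
  have hMM' : M * M' = 1 := Matrix.map_injective hinj <| by
    change (M * M').map _ = Matrix.map 1 _
    rw [Matrix.map_mul, hM, hM', ← Matrix.map_mul, Matrix.mul_nonsing_inv _ hG',
      Matrix.map_one _ (map_zero _) (map_one _), Matrix.map_one _ (map_zero _) (map_one _)]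
  exact ⟨M, .of_mul_eq_one M'.det (by rw [← Matrix.det_mul, hMM', Matrix.det_one]), hM⟩

theorem exists_mem_shiftIdeal (hW : W ≤ nonZeroDivisors R) (F : Matrix (Fin l) (Fin m) R[X])
    (D : Matrix (Fin l) (Fin m) S)
    (h : MatrixEquiv (F.map (mapRingHom (algebraMap R S))) (D.map C)) :
    ∃ b ∈ W, b ∈ shiftIdeal F := by
  obtain ⟨G, H, hG, hH, hG1, hH1, hGH⟩ := h.exists_map_eq_mul_mul
    (evalRingHom_zero_comp_shiftHom 1) (evalRingHom_comp_C 0) (by ext1 i j; simp)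
  obtain ⟨b, hb, hM⟩ := exists_isUnit_map_eq_map_scaleHom W hW hG1 hG
  obtain ⟨b', hb', hN⟩ := exists_isUnit_map_eq_map_scaleHom W hW hH1 hH
  obtain ⟨M, hM, hMG⟩ := hM (b * b') (dvd_mul_right b b')
  obtain ⟨N, hN, hNH⟩ := hN (b * b') (dvd_mul_left b' b)
  have hinj : Function.Injective (mapRingHom (mapRingHom (algebraMap R S))) :=
    map_injective _ (map_injective _ (IsLocalization.injective S hW))
  have hscale := congrArg (fun A => A.map (scaleHom (algebraMap R S (b * b')))) hGH
  refine ⟨b * b', W.mul_mem hb hb', M, N, hM, hN, Matrix.map_injective hinj ?_⟩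
  simp only [Matrix.map_mul, hMG, hNH, map_map_ringHom, ← RingHom.comp_assoc,
    scaleHom_comp_shiftHom, scaleHom_comp_C, mul_one] at hscale ⊢
  rw [mapRingHom_comp_shiftHom, hscale, mapRingHom_comp_C]

end Localization

theorem matrixEquiv_map_C_eval_zero_of_shiftIdeal_eq_top {F : Matrix (Fin l) (Fin m) R[X]}
    (hF : shiftIdeal F = ⊤) : MatrixEquiv F ((F.map (evalRingHom 0)).map C) := by
  let θ : R[X][X] →+* R[X] := eval₂RingHom (C.comp (evalRingHom 0)) X
  have hshift : θ.comp (shiftHom 1) = .id _ := Polynomial.ringHom_ext (by simp [θ]) (by simp [θ])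
  have hC : θ.comp C = C.comp (evalRingHom 0) := RingHom.ext fun _ => by simp [θ]
  have h : MatrixEquiv (F.map (shiftHom 1)) (F.map C) :=
    (hF ▸ Submodule.mem_top : (1 : R) ∈ shiftIdeal F)
  simpa only [map_map_ringHom, hshift, hC, RingHom.coe_id, Matrix.map_id] using h.map θ

theorem matrixEquiv_map_C_eval_zero_of_localization [IsDomain R]
    (F : Matrix (Fin l) (Fin m) R[X])
    (h : ∀ (M : Ideal R) [M.IsMaximal], ∃ D : Matrix (Fin l) (Fin m) (Localization.AtPrime M),
      MatrixEquiv (F.map (mapRingHom (algebraMap R (Localization.AtPrime M)))) (D.map C)) :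
    MatrixEquiv F ((F.map (evalRingHom 0)).map C) := by
  refine matrixEquiv_map_C_eval_zero_of_shiftIdeal_eq_top (by_contra fun hne => ?_)
  obtain ⟨M, hM, hle⟩ := Ideal.exists_le_maximal _ hne
  obtain ⟨D, hD⟩ := h M
  obtain ⟨b, hbM, hb⟩ := exists_mem_shiftIdeal M.primeCompl M.primeCompl_le_nonZeroDivisors F D hD
  exact hbM (hle hb)

end Patching

section PolynomialInduction

variable {R : Type*} [CommRing R] [IsDomain R] {l : ℕ}

theorem HasDetDivisors.matrixEquiv_map_C_eval_zero {q : Fin l → R} (hq0 : ∀ i, q i ≠ 0)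
    (hq : ∀ i j, i ≤ j → q i ∣ q j) {F : Matrix (Fin l) (Fin l) R[X]}
    (hF : HasDetDivisors (fun i => C (q i)) F) {w : R[X]} (hw : w.Monic)
    (hwF : MatrixNearDiag w (fun i => C (q i)) F) :
    MatrixEquiv F ((F.map (evalRingHom 0)).map C) := by
  refine matrixEquiv_map_C_eval_zero_of_localization F fun M _ => ?_
  have hM := M.primeCompl_le_nonZeroDivisors
  have : IsDomain (Localization.AtPrime M) := IsLocalization.isDomain_localization hM
  set ι := algebraMap R (Localization.AtPrime M)
  have hinj : Function.Injective ι := IsLocalization.injective _ hM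
  have hF' := hF.map (mapRingHom ι)
  have hwF' := hwF.map (mapRingHom ι)
  simp only [coe_mapRingHom, map_C] at hF' hwF'
  refine ⟨Matrix.diagonal fun i => ι (q i), ?_⟩
  rw [Matrix.diagonal_map (map_zero C)]
  exact hF'.matrixEquiv_diagonal_of_monic (fun i => (map_ne_zero_iff _ hinj).2 (hq0 i))
    (fun i j hij => map_dvd ι (hq i j hij)) (hw.map ι) hwF'

end PolynomialInduction

section Variables

theorem map_polyImage {K L : Type*} [CommRing K] [CommRing L] (θ : K →+* L) (n : ℕ) (p : K[X]) :
    MvPolynomial.map θ (polyImage n p) = polyImage n (p.map θ) := by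
  rw [polyImage, polyImage, map_aeval_eq_aeval_map (φ := θ) (RingHom.ext fun _ => by simp),
    MvPolynomial.map_X]

theorem polyImage_ne_zero {K : Type*} [CommRing K] {n : ℕ} {p : K[X]} (hp : p ≠ 0) :
    polyImage n p ≠ 0 := by
  have hinv : Function.LeftInverse (MvPolynomial.aeval fun _ => (X : K[X])) (polyImage n) :=
    fun p => by rw [polyImage, ← aeval_algHom_apply, MvPolynomial.aeval_X, aeval_X_left_apply]
  have h0 : polyImage n (0 : K[X]) = 0 := map_zero _
  exact h0 ▸ hinv.injective.ne hp

variable (K : Type*) [Field K] (σ : Type*) (n : ℕ)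

theorem uniqueAlgEquiv_polyImage (p : K[X]) :
    MvPolynomial.uniqueAlgEquiv K (Fin 1) (polyImage 0 p) = p := by
  rw [polyImage, ← aeval_algHom_apply]
  simp

/-- Regard the last variable as the main variable. -/
noncomputable def lastVarEquiv :
    MvPolynomial (Fin (n + 1)) K ≃ₐ[K] (MvPolynomial (Fin n) K)[X] :=
  (MvPolynomial.renameEquiv K finSuccEquivLast).trans (MvPolynomial.optionEquivLeft K (Fin n))

theorem lastVarEquiv_polyImage (p : K[X]) :
    lastVarEquiv K (n + 1) (polyImage (n + 1) p) = C (polyImage n p) := by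
  have hX : lastVarEquiv K (n + 1) (MvPolynomial.X 0) = C (MvPolynomial.X 0) := by
    have h0 : finSuccEquivLast (0 : Fin (n + 2)) = some 0 := finSuccEquivLast_castSucc 0
    simp [lastVarEquiv, h0]
  rw [polyImage, polyImage, ← aeval_algHom_apply, hX, ← algebraMap_eq, aeval_algebraMap_apply]

/-- Move the main variable of a polynomial into the coefficients. -/
noncomputable def coeffVarEquiv : (MvPolynomial σ K)[X] ≃ₐ[K] MvPolynomial σ K[X] :=
  (MvPolynomial.optionEquivLeft K σ).symm.trans (MvPolynomial.optionEquivRight K σ)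

theorem coeffVarEquiv_C (f : MvPolynomial σ K) :
    coeffVarEquiv K σ (C f) = MvPolynomial.map C f := by
  have h : (coeffVarEquiv K σ : (MvPolynomial σ K)[X] →+* MvPolynomial σ K[X]).comp C =
      MvPolynomial.map C :=
    MvPolynomial.ringHom_ext (fun a => by simp [coeffVarEquiv]) (fun i => by simp [coeffVarEquiv])
  exact RingHom.congr_fun h f

theorem coeffVarEquiv_map_C (f : K[X]) :
    coeffVarEquiv K σ (f.map MvPolynomial.C) = MvPolynomial.C f := by
  have h : (coeffVarEquiv K σ : (MvPolynomial σ K)[X] →+* MvPolynomial σ K[X]).comp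
      (mapRingHom MvPolynomial.C) = MvPolynomial.C :=
    Polynomial.ringHom_ext (fun a => by simp [coeffVarEquiv]) (by simp [coeffVarEquiv])
  exact RingHom.congr_fun h f

/-- Adjoin the main variable of a polynomial to the field of coefficients. -/
noncomputable def ratFuncCoeffHom : (MvPolynomial σ K)[X] →+* MvPolynomial σ (RatFunc K) :=
  (MvPolynomial.map (algebraMap K[X] (RatFunc K))).comp
    (coeffVarEquiv K σ : (MvPolynomial σ K)[X] →+* MvPolynomial σ K[X])

theorem ratFuncCoeffHom_C_polyImage (p : K[X]) :
    ratFuncCoeffHom K (Fin (n + 1)) (C (polyImage n p)) =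
      polyImage n (p.map ((algebraMap K[X] (RatFunc K)).comp C)) := by
  rw [ratFuncCoeffHom, RingHom.comp_apply, RingHom.coe_coe, coeffVarEquiv_C, MvPolynomial.map_map,
    map_polyImage]

variable {K σ} {l : ℕ}

attribute [local instance] MvPolynomial.algebraMvPolynomial in
theorem exists_monic_matrixNearDiag {q : Fin l → MvPolynomial σ K}
    {F : Matrix (Fin l) (Fin l) (MvPolynomial σ K)[X]}
    (h : MatrixEquiv (F.map (ratFuncCoeffHom K σ))
      (Matrix.diagonal fun i => ratFuncCoeffHom K σ (C (q i)))) :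
    ∃ w : (MvPolynomial σ K)[X], w.Monic ∧ MatrixNearDiag w (fun i => C (q i)) F := by
  let W := (nonZeroDivisors K[X]).map (MvPolynomial.C : K[X] →+* MvPolynomial σ K[X])
  have hW : W ≤ nonZeroDivisors (MvPolynomial σ K[X]) :=
    map_le_nonZeroDivisors_of_injective _ (MvPolynomial.C_injective σ K[X]) le_rfl
  obtain ⟨_, ⟨a, ha, rfl⟩, hF⟩ := exists_matrixNearDiag_of_isLocalization W hW
    (S' := MvPolynomial σ (RatFunc K)) (q := fun i => coeffVarEquiv K σ (C (q i)))
    (F := F.map (coeffVarEquiv K σ)) h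
  have ha0 : a ≠ 0 := nonZeroDivisors.ne_zero ha
  refine ⟨(C a.leadingCoeff⁻¹ * a).map MvPolynomial.C, ?_, ?_⟩
  · exact (monic_C_mul_of_mul_leadingCoeff_eq_one
      (inv_mul_cancel₀ (leadingCoeff_ne_zero.2 ha0))).map _
  · have hback := hF.map ((coeffVarEquiv K σ).symm : MvPolynomial σ K[X] →+* (MvPolynomial σ K)[X])
    have ha' : (coeffVarEquiv K σ).symm (MvPolynomial.C a) = a.map MvPolynomial.C := by
      rw [← coeffVarEquiv_map_C, AlgEquiv.symm_apply_apply]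
    rw [Polynomial.map_mul]
    simpa [Matrix.map_map, Function.comp_def, ha'] using
      hback.mul_weight ((C a.leadingCoeff⁻¹).map MvPolynomial.C)

theorem matrixEquiv_diagonal_of_ringEquiv {S S' : Type*} [CommRing S] [CommRing S'] (e : S ≃+* S')
    {q : Fin l → S} {q' : Fin l → S'} (he : ∀ i, e (q i) = q' i) {F : Matrix (Fin l) (Fin l) S}
    (h : MatrixEquiv (F.map e) (Matrix.diagonal q')) : MatrixEquiv F (Matrix.diagonal q) := by
  rw [← MatrixEquiv.map_iff_of_ringEquiv e, Matrix.diagonal_map (map_zero e)]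
  simpa only [he] using h

universe u in
theorem HasDetDivisors.matrixEquiv_diagonal_polyImage {K : Type u} [Field K] (n : ℕ)
    {q : Fin l → K[X]} (hq0 : ∀ i, q i ≠ 0) (hq : ∀ i j, i ≤ j → q i ∣ q j)
    {F : Matrix (Fin l) (Fin l) (MvPolynomial (Fin (n + 1)) K)}
    (hF : HasDetDivisors (fun i => polyImage n (q i)) F) :
    MatrixEquiv F (Matrix.diagonal fun i => polyImage n (q i)) := by
  induction n generalizing K with
  | zero =>
    let e := (MvPolynomial.uniqueAlgEquiv K (Fin 1)).toRingEquiv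
    have he : ∀ i, e (polyImage 0 (q i)) = q i := fun i => uniqueAlgEquiv_polyImage K (q i)
    have heF := hF.map (e : MvPolynomial (Fin 1) K →+* K[X])
    simp only [RingHom.coe_coe, he] at heF
    exact matrixEquiv_diagonal_of_ringEquiv e he <|
      hasUnitPivots_of_euclideanDomain.matrixEquiv_diagonal hq0 hq heF
  | succ n ih =>
    let e := (lastVarEquiv K (n + 1)).toRingEquiv
    have he : ∀ i, e (polyImage (n + 1) (q i)) = C (polyImage n (q i)) := fun i =>
      lastVarEquiv_polyImage K n (q i)
    have hG := hF.map (e : MvPolynomial (Fin (n + 2)) K →+* (MvPolynomial (Fin (n + 1)) K)[X])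
    simp only [RingHom.coe_coe, he] at hG
    refine matrixEquiv_diagonal_of_ringEquiv e he ?_
    have hfrac := hG.map (ratFuncCoeffHom K (Fin (n + 1)))
    simp only [ratFuncCoeffHom_C_polyImage] at hfrac
    have hfracEquiv := ih (fun i => (Polynomial.map_ne_zero_iff (RingHom.injective _)).2 (hq0 i))
      (fun i j hij => Polynomial.map_dvd _ (hq i j hij)) hfrac
    simp only [← ratFuncCoeffHom_C_polyImage] at hfracEquiv
    obtain ⟨w, hw, hwG⟩ := exists_monic_matrixNearDiag hfracEquiv
    refine (hG.matrixEquiv_map_C_eval_zero (fun i => polyImage_ne_zero (hq0 i))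
      (fun i j hij => map_dvd (aeval (MvPolynomial.X 0)) (hq i j hij)) hw hwG).trans ?_
    have hG0 := hG.map (evalRingHom 0)
    simp only [coe_evalRingHom, eval_C] at hG0
    simpa [Matrix.diagonal_map (map_zero _)] using (ih hq0 hq hG0).map C

end Variables

section ReducedMinors

variable {R : Type*} [CommRing R]

theorem span_eq_span_singleton_mul_of_forall_dvd {d : R} {T : Set R} (h : ∀ a ∈ T, d ∣ a) :
    Ideal.span T = Ideal.span {d} * Ideal.span {b | d * b ∈ T} := by
  rw [Ideal.span_mul_span', Set.singleton_mul]
  congr 1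
  ext a
  constructor
  · intro ha
    obtain ⟨b, rfl⟩ := h a ha
    exact ⟨b, ha, rfl⟩
  · rintro ⟨b, hb, rfl⟩
    exact hb

theorem reducedMinorsUnitIdeal_iff [IsDomain R] {i l m : ℕ} {F : Matrix (Fin l) (Fin m) R} {d : R}
    (hd0 : d ≠ 0) (hd : IsGcdOf d (minorsSet i F)) :
    ReducedMinorsUnitIdeal i F ↔ minorsIdeal i F = Ideal.span {d} := by
  rw [← span_minorsSet]
  refine ⟨fun ⟨d', hd', htop⟩ => ?_, fun h => ⟨d, hd, ?_⟩⟩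
  · rw [span_eq_span_singleton_mul_of_forall_dvd hd'.1, htop, Ideal.mul_top]
    exact le_antisymm (Ideal.span_singleton_le_span_singleton.2 (hd'.2 _ hd.1))
      (Ideal.span_singleton_le_span_singleton.2 (hd.2 _ hd'.1))
  · rw [span_eq_span_singleton_mul_of_forall_dvd hd.1] at h
    exact Ideal.span_singleton_mul_right_injective hd0 (h.trans (Ideal.mul_top _).symm)

theorem prod_Iic_mem_minorsIdeal_diagonal {l : ℕ} (q : Fin l → R) (i : Fin l) :
    ∏ j ∈ Finset.Iic i, q j ∈ minorsIdeal (i + 1) (Matrix.diagonal q) := by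
  have hi : (i : ℕ) + 1 ≤ l := i.isLt
  have hIic : Finset.Iic i = Finset.univ.map (Fin.castLEEmb hi) := by
    ext j
    simp only [Finset.mem_Iic, Finset.mem_map, Finset.mem_univ, true_and]
    exact ⟨fun hj => ⟨⟨j, Nat.lt_succ_of_le hj⟩, rfl⟩, fun ⟨k, hk⟩ => hk ▸ Nat.le_of_lt_succ k.isLt⟩
  have hminor := det_submatrix_mem_minorsIdeal (Matrix.diagonal q) (Fin.castLE hi) (Fin.castLE hi)
  rw [Matrix.submatrix_diagonal _ _ (Fin.castLE_injective hi), Matrix.det_diagonal] at hminor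
  rwa [hIic, Finset.prod_map]

end ReducedMinors

theorem stmt9_general {K : Type*} [Field K] {n l : ℕ} (q : Fin l → K[X]) (hq0 : ∀ i, q i ≠ 0)
    (hq : ∀ i j, i ≤ j → q i ∣ q j) (F : Matrix (Fin l) (Fin l) (MvPolynomial (Fin (n + 1)) K))
    (hSmith : ∀ i : Fin l,
      IsGcdOf (∏ j ∈ Finset.Iic i, polyImage n (q j)) (minorsSet ((i : ℕ) + 1) F)) :
    MatrixEquiv F (Matrix.diagonal fun i => polyImage n (q i)) ↔
      ∀ i : ℕ, 1 ≤ i → i ≤ l → ReducedMinorsUnitIdeal i F := by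
  have hprod0 (i : Fin l) : ∏ j ∈ Finset.Iic i, polyImage n (q j) ≠ 0 :=
    Finset.prod_ne_zero_iff.2 fun j _ => polyImage_ne_zero (hq0 j)
  have hreduced (i : Fin l) := reducedMinorsUnitIdeal_iff (hprod0 i) (hSmith i)
  constructor
  · rintro h (_ | i) hi hil
    · exact absurd hi Nat.one_pos.not_ge
    refine (hreduced ⟨i, hil⟩).2 (le_antisymm ?_ ?_)
    · rw [← span_minorsSet, Ideal.span_le]
      exact fun a ha => Ideal.mem_span_singleton.2 ((hSmith ⟨i, hil⟩).1 a ha)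
    · rw [Ideal.span_singleton_le_iff_mem, h.minorsIdeal_eq]
      exact prod_Iic_mem_minorsIdeal_diagonal _ ⟨i, hil⟩
  · exact fun h => HasDetDivisors.matrixEquiv_diagonal_polyImage n hq0 hq fun i =>
      (hreduced i).1 (h _ i.1.succ_pos i.2)

/-- let `F ∈ A^{l×l}` with `det F = p^t` (`p ∈ K[x₁]` irreducible, `t ≥ 1`)
and Smith form `diag(p^{s₁}, …, p^{s_l})`, `s₁ ≤ ⋯ ≤ s_l` (i.e.
`d_i(F) = p^{s₁ + ⋯ + s_i}` up to associates for every `i`).  Then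
`F ∼ diag(p^{s₁}, …, p^{s_l})` iff `J_i(F) = A` for `i = 1, …, l`. -/
theorem stmt9 {K : Type*} [Field K] {n l : ℕ} (p : Polynomial K) (hp : Irreducible p)
    (t : ℕ) (ht : 0 < t)
    (F : Matrix (Fin l) (Fin l) (MvPolynomial (Fin (n + 1)) K))
    (hdet : F.det = polyImage n p ^ t)
    (s : Fin l → ℕ) (hs : Monotone s)
    (hSmith : ∀ i : Fin l,
      IsGcdOf (polyImage n p ^ (∑ j ∈ Finset.Iic i, s j)) (minorsSet ((i : ℕ) + 1) F)) :
    MatrixEquiv F (Matrix.diagonal (fun i : Fin l => polyImage n p ^ s i)) ↔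
      ∀ i : ℕ, 1 ≤ i → i ≤ l → ReducedMinorsUnitIdeal i F := by
  simpa only [polyImage, map_pow, Finset.prod_pow_eq_pow_sum] using
    stmt9_general (fun i => p ^ s i) (fun i => pow_ne_zero _ hp.ne_zero)
      (fun i j hij => pow_dvd_pow p (hs hij)) F
      (by simpa only [polyImage, map_pow, Finset.prod_pow_eq_pow_sum] using hSmith)
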